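/- arXiv:1706.00554 — 2 statements merged into one kernel-verified Lean document; each statement's English description precedes it below -/
import Mathlib

section
/- Let A be a separable unital C*-algebra and let π : A → B(H) and ρ : A → B(K) be unital representations on separable infinite-dimensional Hilbert spaces H and K. Then π ≺ ρ if and only if π belongs to the closure, in the point-strong operator topology on Rep(A,H), of the set of all κ ∈ Rep(A,H) that are unitarily equivalent to ρ (i.e., κ = u ρ(·) u* for some unitary isomorphism u : K → H). -/
open scoped InnerProductSpace

noncomputable section

/-- The space of unital representations of `A` on `H`, i.e. unital `*`-homomorphisms
`A → B(H)`. -/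
abbrev CRep (A H : Type*) [CStarAlgebra A] [NormedAddCommGroup H]
    [InnerProductSpace ℂ H] [CompleteSpace H] : Type _ :=
  A →⋆ₐ[ℂ] (H →L[ℂ] H)

/-- The point-strong operator topology on `CRep A H`: the topology of pointwise convergence
with `B(H)` carrying the strong operator topology (i.e. pointwise convergence on vectors). -/
instance CRep.instTopologicalSpace (A H : Type*) [CStarAlgebra A] [NormedAddCommGroup H]
    [InnerProductSpace ℂ H] [CompleteSpace H] : TopologicalSpace (CRep A H) :=
  TopologicalSpace.induced (fun π => (fun (a : A) (x : H) => π a x)) inferInstance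

/-- The weak containment relation `π ≺ ρ`: for every finite set `Ω ⊆ A`, every finite
orthonormal family `ξ` in `H` and every `ε > 0` there is an orthonormal family `ζ` in `K`
of the same size with `|⟨π(a)ξᵢ, ξᵢ⟩ − ⟨ρ(a)ζᵢ, ζᵢ⟩| < ε` for all `a ∈ Ω` and all `i`. -/
def CRepPrec {A H K : Type*} [CStarAlgebra A] [NormedAddCommGroup H]
    [InnerProductSpace ℂ H] [CompleteSpace H] [NormedAddCommGroup K]
    [InnerProductSpace ℂ K] [CompleteSpace K]
    (π : CRep A H) (ρ : CRep A K) : Prop :=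
  ∀ (Ω : Finset A) (n : ℕ) (ξ : Fin n → H), Orthonormal ℂ ξ → ∀ ε : ℝ, 0 < ε →
    ∃ ζ : Fin n → K, Orthonormal ℂ ζ ∧
      ∀ a ∈ Ω, ∀ i : Fin n, ‖⟪π a (ξ i), ξ i⟫_ℂ - ⟪ρ a (ζ i), ζ i⟫_ℂ‖ < ε

open Filter Topology

section Hilbert

variable {H K : Type*} [NormedAddCommGroup H] [InnerProductSpace ℂ H]
  [NormedAddCommGroup K] [InnerProductSpace ℂ K]

/-- An orthonormal family in a separable inner product space is countable. -/
theorem Orthonormal.countable_of_separableSpace [TopologicalSpace.SeparableSpace H] {ι : Type*}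
    {v : ι → H} (hv : Orthonormal ℂ v) : Countable ι := by
  refine Pairwise.countable_of_isOpen_disjoint (s := fun i => Metric.ball (v i) (1 / 2)) ?_
    (fun _ => Metric.isOpen_ball) (fun i => ⟨v i, Metric.mem_ball_self (by norm_num)⟩)
  intro i j hij
  refine Metric.ball_disjoint_ball ?_
  have h : ‖v i - v j‖ ^ 2 = 2 := by
    rw [@norm_sub_sq ℂ, hv.2 hij, hv.1 i, hv.1 j]; norm_num
  rw [dist_eq_norm]
  nlinarith [norm_nonneg (v i - v j)]

/-- A finite orthonormal family in a separable infinite-dimensional Hilbert space extends to a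
Hilbert basis whose index set is countably infinite. -/
theorem Orthonormal.exists_hilbertBasis_nat [CompleteSpace H] [TopologicalSpace.SeparableSpace H]
    (hH : ¬ FiniteDimensional ℂ H) {n : ℕ} {v : Fin n → H} (hv : Orthonormal ℂ v) :
    ∃ (b : HilbertBasis ℕ ℂ H) (f : Fin n ↪ ℕ), ∀ k, b (f k) = v k := by
  obtain ⟨w, b, hvw, hb⟩ := hv.toSubtypeRange.exists_hilbertBasis_extension
  have hw : Countable w := b.orthonormal.countable_of_separableSpace
  have hinf : Infinite w := by
    by_contra hfin
    rw [not_infinite_iff_finite] at hfin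
    have := Fintype.ofFinite w
    exact hH (Module.Finite.of_basis b.toOrthonormalBasis.toBasis)
  obtain ⟨e⟩ : Nonempty (ℕ ≃ w) := nonempty_equiv_of_countable
  have ho : Orthonormal ℂ (b ∘ e) := b.orthonormal.comp e e.injective
  have hsp : ⊤ ≤ (Submodule.span ℂ (Set.range (b ∘ e))).topologicalClosure := by
    rw [e.surjective.range_comp]; exact b.dense_span.ge
  refine ⟨HilbertBasis.mk ho hsp,
    ⟨fun k => e.symm ⟨v k, hvw ⟨k, rfl⟩⟩, fun i j hij => ?_⟩, fun k => ?_⟩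
  · simpa [hv.linearIndependent.injective.eq_iff] using hij
  · rw [HilbertBasis.coe_mk, Function.comp_apply, hb]
    exact congrArg Subtype.val (e.apply_symm_apply _)

/-- Two finite orthonormal families of the same size in separable infinite-dimensional Hilbert
spaces are matched by a unitary. -/
theorem Orthonormal.exists_linearIsometryEquiv [CompleteSpace H] [CompleteSpace K]
    [TopologicalSpace.SeparableSpace H] [TopologicalSpace.SeparableSpace K]
    (hH : ¬ FiniteDimensional ℂ H) (hK : ¬ FiniteDimensional ℂ K) {n : ℕ}
    {v : Fin n → K} {w : Fin n → H} (hv : Orthonormal ℂ v) (hw : Orthonormal ℂ w) :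
    ∃ u : K ≃ₗᵢ[ℂ] H, ∀ k, u (v k) = w k := by
  obtain ⟨b, f, hf⟩ := hv.exists_hilbertBasis_nat hK
  obtain ⟨c, g, hg⟩ := hw.exists_hilbertBasis_nat hH
  obtain ⟨e, he⟩ := Cardinal.extend_function_of_lt (s := Set.range f)
    ((Equiv.ofInjective f f.injective).symm.toEmbedding.trans g)
    (by rw [Cardinal.mk_nat]; exact Cardinal.lt_aleph0_of_finite _) ⟨Equiv.refl ℕ⟩
  have ho : Orthonormal ℂ (c ∘ e) := c.orthonormal.comp e e.injective
  have hsp : ⊤ ≤ (Submodule.span ℂ (Set.range (c ∘ e))).topologicalClosure := by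
    rw [e.surjective.range_comp]; exact c.dense_span.ge
  refine ⟨b.repr.trans (HilbertBasis.mk ho hsp).repr.symm, fun k => ?_⟩
  have := he ⟨f k, k, rfl⟩
  simp only [Function.Embedding.trans_apply, Equiv.coe_toEmbedding,
    Equiv.ofInjective_symm_apply] at this
  rw [← hf, LinearIsometryEquiv.trans_apply, HilbertBasis.repr_self,
    HilbertBasis.repr_symm_single, HilbertBasis.coe_mk, Function.comp_apply, this, hg]

/-- An asymptotically orthonormal finite family is asymptotic to an orthonormal one. -/
theorem exists_orthonormal_of_tendsto_inner {α : Type*} {l : Filter α} (m : ℕ)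
    (f : α → Fin m → K)
    (hf : ∀ i j, Tendsto (fun t => ⟪f t i, f t j⟫_ℂ) l (𝓝 (if i = j then 1 else 0))) :
    ∃ g : α → Fin m → K, (∀ᶠ t in l, Orthonormal ℂ (g t)) ∧
      ∀ i, Tendsto (fun t => f t i - g t i) l (𝓝 0) := by
  induction m with
  | zero => exact ⟨f, .of_forall fun t => by simp, fun i => i.elim0⟩
  | succ m ih =>
    obtain ⟨g, hg, hfg⟩ := ih (fun t i => f t i.castSucc) (fun i j => by
      simpa using hf i.castSucc j.castSucc)
    set z : α → K := fun t => f t (Fin.last m)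
    have hnz : Tendsto (fun t => ‖z t‖) l (𝓝 1) := by
      have := (hf (Fin.last m) (Fin.last m)).norm.sqrt
      simpa [z, inner_self_eq_norm_sq_to_K] using this
    have hc : ∀ i, Tendsto (fun t => ⟪g t i, z t⟫_ℂ) l (𝓝 0) := by
      intro i
      have h1 := hf i.castSucc (Fin.last m)
      have h2 : Tendsto (fun t => ⟪f t i.castSucc - g t i, z t⟫_ℂ) l (𝓝 0) := by
        refine squeeze_zero_norm (fun t => norm_inner_le_norm _ _) ?_
        simpa using (hfg i).norm.mul hnz
      have h3 := h1.sub h2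
      simpa [inner_sub_left, z, (Fin.castSucc_lt_last i).ne] using h3
    set p : α → K := fun t => z t - ∑ i, ⟪g t i, z t⟫_ℂ • g t i
    have hzp : Tendsto (fun t => z t - p t) l (𝓝 0) := by
      have h : ∀ i, Tendsto (fun t => ⟪g t i, z t⟫_ℂ • g t i) l (𝓝 0) := by
        intro i
        refine squeeze_zero_norm' (a := fun t => ‖⟪g t i, z t⟫_ℂ‖) ?_ (by simpa using (hc i).norm)
        filter_upwards [hg] with t ht
        simp [norm_smul, ht.1 i]
      simpa [p] using tendsto_finsetSum Finset.univ fun i _ => h i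
    have hnp : Tendsto (fun t => ‖p t‖) l (𝓝 1) := by
      have h : Tendsto (fun t => ‖z t‖ - (‖z t‖ - ‖p t‖)) l (𝓝 (1 - 0)) :=
        hnz.sub (squeeze_zero_norm (fun t => abs_norm_sub_norm_le _ _) (by simpa using hzp.norm))
      simpa using h
    have hp0 : ∀ᶠ t in l, ‖p t‖ ≠ 0 := hnp.eventually_ne one_ne_zero
    refine ⟨fun t => Fin.snoc (g t) ((‖p t‖⁻¹ : ℂ) • p t), ?_, fun i => ?_⟩
    · filter_upwards [hg, hp0] with t ht hpt
      have horth : ∀ i, ⟪g t i, p t⟫_ℂ = 0 := by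
        intro i
        simp [p, orthonormal_iff_ite.1 ht]
      have horth' : ∀ i, ⟪p t, g t i⟫_ℂ = 0 := fun i => inner_eq_zero_symm.1 (horth i)
      rw [orthonormal_iff_ite]
      intro i j
      refine Fin.lastCases ?_ (fun i => ?_) i <;> refine Fin.lastCases ?_ (fun j => ?_) j
      · have : ‖(‖p t‖⁻¹ : ℂ) • p t‖ = 1 := by simp [norm_smul, hpt]
        simp only [Fin.snoc_last, inner_self_eq_norm_sq_to_K, this]
        simp
      · simp [inner_smul_left, horth', (Fin.castSucc_lt_last j).ne']
      · simp [inner_smul_right, horth, (Fin.castSucc_lt_last i).ne]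
      · simp [orthonormal_iff_ite.1 ht]
    · refine Fin.lastCases ?_ (fun i => ?_) i
      · have h : Tendsto (fun t => p t - (‖p t‖⁻¹ : ℂ) • p t) l (𝓝 0) := by
          have h1 : Tendsto (fun t => ‖p t‖ - 1) l (𝓝 0) := by simpa using hnp.sub_const 1
          refine squeeze_zero_norm' (a := fun t => ‖‖p t‖ - 1‖) ?_ (by simpa using h1.norm)
          filter_upwards [hp0] with t hpt
          have : p t - (‖p t‖⁻¹ : ℂ) • p t = ((‖p t‖ - 1 : ℝ) * (‖p t‖⁻¹ : ℝ) : ℂ) • p t := by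
            have : (‖p t‖ : ℂ) ≠ 0 := by exact_mod_cast hpt
            push_cast
            rw [sub_mul, mul_inv_cancel₀ this, sub_smul, one_smul, one_mul]
          rw [this, norm_smul, norm_mul, Complex.norm_real, Complex.norm_real, mul_assoc,
            Real.norm_of_nonneg (inv_nonneg.2 (norm_nonneg _)), inv_mul_cancel₀ hpt, mul_one]
        simpa [z] using hzp.add h
      · simpa using hfg i

theorem sum_ite_sub_sum_mul_smul {M ι κ : Type*} [Fintype ι] [Fintype κ] [DecidableEq ι]
    [AddCommGroup M] [Module ℂ M] (i : ι) (r : κ → ℂ) (c : κ → ι → ℂ) (x : ι → M) :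
    ∑ j, ((if j = i then 1 else 0) - ∑ k, r k * c k j) • x j =
      x i - ∑ k, r k • ∑ j, c k j • x j := by
  simp only [sub_smul, Finset.sum_sub_distrib, ite_smul, one_smul, zero_smul,
    Finset.sum_ite_eq', Finset.mem_univ, if_true, Finset.sum_smul, Finset.smul_sum, smul_smul]
  rw [Finset.sum_comm]

/-- If the Gram matrices of finite families `h t` in `K` converge to the Gram matrix of `g` in
`H`, then some unitaries carry `h t` to families converging to `g`. -/
theorem exists_linearIsometryEquiv_tendsto_of_tendsto_inner [CompleteSpace H] [CompleteSpace K]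
    [TopologicalSpace.SeparableSpace H] [TopologicalSpace.SeparableSpace K]
    (hH : ¬ FiniteDimensional ℂ H) (hK : ¬ FiniteDimensional ℂ K)
    {ι α : Type*} [Fintype ι] {l : Filter α} {g : ι → H} {h : α → ι → K}
    (hgh : ∀ i j, Tendsto (fun t => ⟪h t i, h t j⟫_ℂ) l (𝓝 ⟪g i, g j⟫_ℂ)) :
    ∃ u : α → K ≃ₗᵢ[ℂ] H, ∀ i, Tendsto (fun t => u t (h t i)) l (𝓝 (g i)) := by
  have hcomb : ∀ c d : ι → ℂ, Tendsto (fun t => ⟪∑ i, c i • h t i, ∑ i, d i • h t i⟫_ℂ) l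
      (𝓝 ⟪∑ i, c i • g i, ∑ i, d i • g i⟫_ℂ) := by
    intro c d
    simp only [sum_inner, inner_sum, inner_smul_left, inner_smul_right, Finset.mul_sum]
    exact tendsto_finsetSum _ fun i _ => tendsto_finsetSum _ fun j _ =>
      ((hgh _ _).const_mul _).const_mul _
  set E := Submodule.span ℂ (Set.range g)
  have : FiniteDimensional ℂ E := FiniteDimensional.span_of_finite ℂ (Set.finite_range g)
  set b := stdOrthonormalBasis ℂ E
  have hb : Orthonormal ℂ (fun k => (b k : H)) :=
    b.orthonormal.comp_linearIsometry E.subtypeₗᵢ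
  choose c hc using fun k => (Submodule.mem_span_range_iff_exists_fun ℂ).1 (b k).2
  obtain ⟨f, hfo, hf⟩ := exists_orthonormal_of_tendsto_inner _
    (fun t k => ∑ i, c k i • h t i) (l := l) (fun k k' => by
      have := hcomb (c k) (c k')
      rwa [hc, hc, orthonormal_iff_ite.1 hb] at this)
  choose u hu using fun t => (show ∃ u : K ≃ₗᵢ[ℂ] H, Orthonormal ℂ (f t) → ∀ k, u (f t k) = b k by
    by_cases ht : Orthonormal ℂ (f t)
    · obtain ⟨u, hu⟩ := ht.exists_linearIsometryEquiv hH hK hb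
      exact ⟨u, fun _ => hu⟩
    · obtain ⟨u, -⟩ := Orthonormal.exists_linearIsometryEquiv hH hK
        (v := Fin.elim0) (w := Fin.elim0) (by simp) (by simp)
      exact ⟨u, fun h => (ht h).elim⟩)
  refine ⟨u, fun i => ?_⟩
  set gi : E := ⟨g i, Submodule.subset_span ⟨i, rfl⟩⟩
  have hgi : g i = ∑ k, ⟪b k, gi⟫_ℂ • (b k : H) := by
    have := congrArg Subtype.val (b.sum_repr' gi)
    simpa [gi] using this.symm
  classical
  set d : ι → ℂ := fun j => (if j = i then 1 else 0) - ∑ k, ⟪b k, gi⟫_ℂ * c k j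
  have h1 : Tendsto (fun t => ∑ j, d j • h t j) l (𝓝 0) := by
    have := (hcomb d d).norm.sqrt
    have h0 : ∑ j, d j • g j = 0 := by
      rw [sum_ite_sub_sum_mul_smul, sub_eq_zero]; simp only [hc]; exact hgi
    rw [tendsto_zero_iff_norm_tendsto_zero]
    simpa [h0, inner_self_eq_norm_sq_to_K] using this
  have h2 : Tendsto (fun t => ∑ k, ⟪b k, gi⟫_ℂ • (∑ j, c k j • h t j - f t k)) l (𝓝 0) := by
    simpa using tendsto_finsetSum Finset.univ fun k _ => (hf k).const_smul ⟪b k, gi⟫_ℂ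
  rw [tendsto_iff_norm_sub_tendsto_zero]
  refine (tendsto_zero_iff_norm_tendsto_zero.1 (show Tendsto _ l (𝓝 0) by
    simpa using h1.add h2)).congr' ?_
  filter_upwards [hfo] with t ht
  have hut : u t (∑ k, ⟪b k, gi⟫_ℂ • f t k) = g i := by
    rw [map_sum, hgi]; simp [hu t ht]
  rw [← hut, ← map_sub, LinearIsometryEquiv.norm_map]
  congr 1
  rw [sum_ite_sub_sum_mul_smul]
  simp [smul_sub]

/-- A linear map which is not injective on a finite-dimensional subspace lowers its dimension. -/
theorem Submodule.finrank_map_lt_of_apply_eq_zero {V : Submodule ℂ K} [FiniteDimensional ℂ V]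
    {S : K →ₗ[ℂ] K} {v : K} (hv : v ∈ V) (hv0 : v ≠ 0) (hS : S v = 0) :
    Module.finrank ℂ (V.map S) < Module.finrank ℂ V := by
  have h := LinearMap.finrank_range_add_finrank_ker (S.domRestrict V)
  rw [LinearMap.range_domRestrict] at h
  have : 0 < Module.finrank ℂ (LinearMap.ker (S.domRestrict V)) := by
    have : Nontrivial (LinearMap.ker (S.domRestrict V)) :=
      ⟨⟨⟨⟨v, hv⟩, by simpa using hS⟩, 0, fun h => hv0 (by simpa using h)⟩⟩
    exact Module.finrank_pos
  lia

/-- A nonzero self-adjoint operator with range in a finite-dimensional subspace has an eigenvector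
there for a nonzero eigenvalue. -/
theorem exists_eigenvector_of_range_le {T : K →ₗ[ℂ] K} (hT : T.IsSymmetric) (hT0 : T ≠ 0)
    {V : Submodule ℂ K} [FiniteDimensional ℂ V] (hV : ∀ x, T x ∈ V) :
    ∃ v ∈ V, v ≠ 0 ∧ ∃ μ : ℂ, μ ≠ 0 ∧ T v = μ • v := by
  by_contra! hcon
  have hVinv : ∀ v ∈ V, T v ∈ V := fun v _ => hV v
  have hsym : (T.restrict hVinv).IsSymmetric := hT.restrict_invariant hVinv
  have hzero : T.restrict hVinv = 0 := by
    refine (hsym.eigenvectorBasis rfl).toBasis.ext fun i => ?_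
    have h := hsym.apply_eigenvectorBasis rfl i
    have hne : (hsym.eigenvectorBasis rfl i : K) ≠ 0 := by
      simpa using (hsym.eigenvectorBasis rfl).orthonormal.ne_zero i
    by_cases hμ : ((hsym.eigenvalues rfl i : ℝ) : ℂ) = 0
    · rw [OrthonormalBasis.coe_toBasis, h]
      simp [Complex.ofReal_eq_zero.1 hμ]
    · exact (hcon _ (Subtype.prop _) hne _ hμ (congrArg Subtype.val h)).elim
  refine hT0 (LinearMap.ext fun x => ?_)
  have h : T (T x) = 0 := by
    simpa using congrArg Subtype.val (LinearMap.congr_fun hzero ⟨T x, hV x⟩)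
  rw [LinearMap.zero_apply, ← inner_self_eq_zero (𝕜 := ℂ), hT, h, inner_zero_right]

end Hilbert

section Atoms

variable {A H K : Type*} [CStarAlgebra A]
  [NormedAddCommGroup H] [InnerProductSpace ℂ H] [CompleteSpace H]
  [NormedAddCommGroup K] [InnerProductSpace ℂ K] [CompleteSpace K]

theorem CRep.mul_apply (ρ : CRep A K) (a b : A) (x : K) : ρ (a * b) x = ρ a (ρ b x) := by
  simp

theorem CRep.inner_star_left (ρ : CRep A K) (a : A) (x y : K) :
    ⟪ρ (star a) x, y⟫_ℂ = ⟪x, ρ a y⟫_ℂ := by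
  rw [map_star, ContinuousLinearMap.star_eq_adjoint, ContinuousLinearMap.adjoint_inner_left]

theorem CRep.inner_star_right (ρ : CRep A K) (a : A) (x y : K) :
    ⟪x, ρ (star a) y⟫_ℂ = ⟪ρ a x, y⟫_ℂ := by
  rw [map_star, ContinuousLinearMap.star_eq_adjoint, ContinuousLinearMap.adjoint_inner_right]

theorem CRep.apply_eq_zero_of_star_mul_self (ρ : CRep A K) {a : A} {x : K}
    (h : ρ (star a * a) x = 0) : ρ a x = 0 := by
  rw [← inner_self_eq_zero (𝕜 := ℂ), ← ρ.inner_star_right, ← ρ.mul_apply, h, inner_zero_right]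

theorem CRep.eq_of_eq {π : CRep A H} {ρ : CRep A K} (hker : ∀ a, ρ a = 0 → π a = 0) {a b : A}
    (h : ρ a = ρ b) : π a = π b := by
  rw [← sub_eq_zero, ← map_sub] at h ⊢
  exact hker _ h

/-- The range of the operator `ρ a`. -/
def CRep.rangeOf (ρ : CRep A K) (a : A) : Submodule ℂ K := LinearMap.range (ρ a).toLinearMap

theorem CRep.mem_rangeOf {ρ : CRep A K} {a : A} {x : K} : x ∈ ρ.rangeOf a ↔ ∃ y, ρ a y = x :=
  Iff.rfl

theorem CRep.rangeOf_mul (ρ : CRep A K) (a b : A) :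
    ρ.rangeOf (a * b) = (ρ.rangeOf b).map (ρ a).toLinearMap := by
  ext x
  simp [CRep.mem_rangeOf]

/-- An element `b` whose image under `ρ` is a finite-rank projection with one-dimensional
corner algebra. -/
structure CRep.IsAtom (ρ : CRep A K) (b : A) : Prop where
  isSelfAdjoint : IsSelfAdjoint b
  map_mul_self : ρ (b * b) = ρ b
  finiteDimensional : FiniteDimensional ℂ (ρ.rangeOf b)
  corner : ∀ a, ∃ c : ℂ, ρ (b * a * b) = c • ρ b

/-- If some `g` with `ρ g` of finite rank does not kill the cyclic subspace of `x`, then some atom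
does not either. -/
theorem CRep.exists_isAtom {π : CRep A H} {ρ : CRep A K} (hker : ∀ a, ρ a = 0 → π a = 0)
    {x : H} {g₀ : A} (hg₀ : FiniteDimensional ℂ (ρ.rangeOf g₀)) (hx : π g₀ x ≠ 0) :
    ∃ b, ρ.IsAtom b ∧ ∃ a, π (b * a) x ≠ 0 := by
  let S : Set A := {g | FiniteDimensional ℂ (ρ.rangeOf g) ∧ ∃ a, π (g * a) x ≠ 0}
  let rk : A → ℕ := fun g => Module.finrank ℂ (ρ.rangeOf g)
  have hSne : S.Nonempty := ⟨g₀, hg₀, 1, by simpa using hx⟩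
  obtain ⟨g₁, ⟨hfin₁, a₁, ha₁⟩, hmin₁⟩ : ∃ g ∈ S, ∀ g' ∈ S, rk g ≤ rk g' := by
    obtain ⟨g, hg, hmin⟩ := exists_minimalFor_of_wellFoundedLT (· ∈ S) rk hSne
    exact ⟨g, hg, fun g' hg' => (le_total (rk g) (rk g')).elim id (hmin hg')⟩
  obtain ⟨g, hsa, ⟨hfin, a₀, ha₀⟩, hmin⟩ :
      ∃ g, IsSelfAdjoint g ∧ g ∈ S ∧ ∀ g' ∈ S, rk g ≤ rk g' := by
    refine ⟨star g₁ * g₁, .star_mul_self g₁, ⟨?_, a₁, fun h => ha₁ ?_⟩, fun g' hg' =>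
      le_trans ?_ (hmin₁ g' hg')⟩
    · rw [ρ.rangeOf_mul]; infer_instance
    · rw [π.mul_apply]
      exact π.apply_eq_zero_of_star_mul_self (by rw [← π.mul_apply]; exact h)
    · change Module.finrank _ _ ≤ _
      rw [ρ.rangeOf_mul]
      exact Submodule.finrank_map_le _ _
  -- left multiplication by an element killing a vector in the range lowers the rank
  have hdrop : ∀ (s : A) (v : K), v ∈ ρ.rangeOf g → v ≠ 0 → ρ s v = 0 →
      ∀ a, π (s * g * a) x = 0 := by
    intro s v hv hv0 hs a
    by_contra hne
    have hmem : s * g ∈ S := ⟨by rw [ρ.rangeOf_mul]; infer_instance, a, hne⟩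
    refine (hmin _ hmem).not_gt ?_
    change Module.finrank _ _ < _
    rw [ρ.rangeOf_mul]
    exact Submodule.finrank_map_lt_of_apply_eq_zero hv hv0 hs
  have hρg : ρ g ≠ 0 := fun h => ha₀ (by simp [hker g h])
  have hne : Nontrivial (ρ.rangeOf g) := by
    rw [Submodule.nontrivial_iff_ne_bot]
    intro h
    refine hρg (ContinuousLinearMap.ext fun y => ?_)
    have : ρ g y ∈ ρ.rangeOf g := ⟨y, rfl⟩
    simpa [h] using this
  have hcorner : ∀ a, ∃ c : ℂ, ρ (g * a * g) = c • ρ g := by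
    intro a
    have hinv : ∀ v ∈ ρ.rangeOf g, (ρ (g * a)).toLinearMap v ∈ ρ.rangeOf g := fun v _ =>
      ⟨ρ a v, by simp⟩
    obtain ⟨c, hc⟩ := Module.End.exists_eigenvalue ((ρ (g * a)).toLinearMap.restrict hinv)
    obtain ⟨v, hv⟩ := hc.exists_hasEigenvector
    have hv1 : ρ (g * a) v = c • (v : K) := by
      simpa using congrArg Subtype.val hv.apply_eq_smul
    set k : A := (g * a - algebraMap ℂ A c) * g with hk
    have hkx : ∀ d, π (k * d) x = 0 := hdrop _ v v.2 (by simpa using hv.2) (by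
      rw [map_sub, sub_apply, hv1, AlgHomClass.commutes]
      simp [Algebra.algebraMap_eq_smul_one])
    refine ⟨c, ?_⟩
    suffices h : ρ k = 0 by
      rw [← sub_eq_zero, ← map_smul, ← map_sub, ← h, hk, sub_mul, Algebra.smul_def]
    by_contra hρk
    have hT0 : (ρ (star k * k)).toLinearMap ≠ 0 := fun h => hρk
      (ContinuousLinearMap.ext fun y => ρ.apply_eq_zero_of_star_mul_self
        (LinearMap.congr_fun h y))
    have hsymm : (ρ (star k * k)).toLinearMap.IsSymmetric := by
      intro y z
      have := ρ.inner_star_left (star k * k) y z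
      rwa [star_mul, star_star] at this
    have hrange : ∀ y, (ρ (star k * k)).toLinearMap y ∈ ρ.rangeOf g := by
      intro y
      have : star k = g * star (g * a - algebraMap ℂ A c) := by
        rw [hk, star_mul, hsa.star_eq]
      rw [this, mul_assoc]
      exact ⟨ρ (star (g * a - algebraMap ℂ A c) * k) y, (ρ.mul_apply _ _ y).symm⟩
    obtain ⟨w, hwV, hw0, μ, hμ, hw⟩ := exists_eigenvector_of_range_le hsymm hT0 hrange
    refine ha₀ ?_
    have h := hdrop (1 - μ⁻¹ • (star k * k)) w hwV hw0 (by
      have hw' : ρ (star k * k) w = μ • w := hw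
      rw [map_sub, map_smul, sub_apply, smul_apply, hw']
      simp [smul_smul, hμ]) a₀
    have h0 : π (star k * k * g * a₀) x = 0 := by
      rw [mul_assoc, mul_assoc, π.mul_apply, hkx, map_zero]
    rwa [sub_mul, sub_mul, one_mul, map_sub, sub_apply, smul_mul_assoc,
      smul_mul_assoc, map_smul, smul_apply, h0, smul_zero, sub_zero] at h
  obtain ⟨c, hc⟩ := hcorner 1
  rw [mul_one] at hc
  have hc0 : c ≠ 0 := by
    rintro rfl
    refine hρg (ContinuousLinearMap.ext fun y => ρ.apply_eq_zero_of_star_mul_self ?_)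
    rw [hsa.star_eq, hc]; simp
  have hcreal : star c = c := by
    have h := congrArg star hc
    rw [← map_star, star_mul, hsa.star_eq, star_smul, ← map_star, hsa.star_eq, hc] at h
    exact (smul_left_injective ℂ hρg h).symm
  refine ⟨c⁻¹ • g, ⟨?_, ?_, ?_, fun a => ?_⟩, a₀, ?_⟩
  · rw [IsSelfAdjoint, star_smul, hsa.star_eq, star_inv₀, hcreal]
  · rw [smul_mul_smul_comm, map_smul, hc, map_smul, smul_smul]
    congr 1
    field_simp
  · have : ρ.rangeOf (c⁻¹ • g) = ρ.rangeOf g := by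
      rw [rangeOf, map_smul]
      exact LinearMap.range_smul _ _ (inv_ne_zero hc0)
    rwa [this]
  · obtain ⟨d, hd⟩ := hcorner a
    refine ⟨c⁻¹ * d, ?_⟩
    rw [smul_mul_assoc, smul_mul_assoc, mul_smul_comm, map_smul, map_smul, hd, map_smul,
      smul_smul, smul_smul, smul_smul]
    congr 1
    ring
  · rw [smul_mul_assoc, map_smul, smul_apply]
    exact smul_ne_zero (inv_ne_zero hc0) ha₀

end Atoms

section Rank

variable {A H K : Type*} [CStarAlgebra A]
  [NormedAddCommGroup H] [InnerProductSpace ℂ H] [CompleteSpace H]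
  [NormedAddCommGroup K] [InnerProductSpace ℂ K] [CompleteSpace K]
  {π : CRep A H} {ρ : CRep A K}

theorem CRepPrec.map_eq_zero (h : CRepPrec π ρ) (a : A) (ha : ρ a = 0) : π a = 0 := by
  have key : ∀ x : H, ‖x‖ = 1 → π a x = 0 := by
    intro x hx
    rw [← inner_self_eq_zero (𝕜 := ℂ), ← π.inner_star_left, ← π.mul_apply, ← norm_le_zero_iff]
    refine le_of_forall_pos_lt_add fun ε hε => ?_
    obtain ⟨ζ, -, hζ⟩ := h {star a * a} 1 (fun _ => x) ⟨fun _ => hx, fun i j hij =>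
      (hij (Subsingleton.elim i j)).elim⟩ ε hε
    simpa [ha] using hζ _ (Finset.mem_singleton_self _) 0
  ext x
  by_cases hx : x = 0
  · simp [hx]
  have h1 := key ((‖x‖⁻¹ : ℂ) • x) (by simp [norm_smul, hx])
  rw [map_smul, smul_eq_zero] at h1
  simpa [hx] using h1

theorem CRep.IsAtom.apply_of_mem (hker : ∀ a, ρ a = 0 → π a = 0) {b : A} (hb : ρ.IsAtom b)
    {y : H} (hy : y ∈ π.rangeOf b) : π b y = y := by
  obtain ⟨z, rfl⟩ := hy
  simpa using congrArg (· z) (CRep.eq_of_eq hker hb.map_mul_self)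

/-- The trace of the compression of an atom to the span of an orthonormal family is at most its
rank. -/
theorem CRep.IsAtom.sum_re_inner_le {b : A} (hb : ρ.IsAtom b) {n : ℕ} {ζ : Fin n → K}
    (hζ : Orthonormal ℂ ζ) :
    ∑ i, (⟪ρ b (ζ i), ζ i⟫_ℂ).re ≤ Module.finrank ℂ (ρ.rangeOf b) := by
  have := hb.finiteDimensional
  set f := stdOrthonormalBasis ℂ (ρ.rangeOf b)
  have hfix : ∀ k, ρ b (f k) = f k := fun k => hb.apply_of_mem (fun _ h => h) (f k).2
  have hterm : ∀ i, (⟪ρ b (ζ i), ζ i⟫_ℂ).re = ∑ k, ‖⟪ζ i, f k⟫_ℂ‖ ^ 2 := by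
    intro i
    set z : ρ.rangeOf b := ⟨ρ b (ζ i), ζ i, rfl⟩
    have h1 : ⟪ρ b (ζ i), ζ i⟫_ℂ = ⟪z, z⟫_ℂ := by
      change _ = ⟪ρ b (ζ i), ρ b (ζ i)⟫_ℂ
      rw [← ρ.inner_star_left, hb.isSelfAdjoint.star_eq, ← ρ.mul_apply, hb.map_mul_self]
    have h2 : (⟪z, z⟫_ℂ).re = ‖z‖ ^ 2 := by
      rw [inner_self_eq_norm_sq_to_K]; norm_cast
    rw [h1, h2, ← f.sum_sq_norm_inner_left z]
    refine Finset.sum_congr rfl fun k _ => ?_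
    congr 2
    change ⟪ρ b (ζ i), (f k : K)⟫_ℂ = _
    have h3 := ρ.inner_star_left b (ζ i) (f k)
    rwa [hb.isSelfAdjoint.star_eq, hfix] at h3
  calc ∑ i, (⟪ρ b (ζ i), ζ i⟫_ℂ).re = ∑ k, ∑ i, ‖⟪ζ i, (f k : K)⟫_ℂ‖ ^ 2 := by
        rw [Finset.sum_congr rfl fun i _ => hterm i, Finset.sum_comm]
    _ ≤ ∑ k, ‖(f k : K)‖ ^ 2 := Finset.sum_le_sum fun k _ => hζ.sum_inner_products_le _
    _ = Module.finrank ℂ (ρ.rangeOf b) := by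
        have hk : ∀ k, ‖(f k : K)‖ = 1 := fun k => f.orthonormal.1 k
        simp [hk]

/-- Under `π ≺ ρ`, the range of an atom in `π` embeds isometrically into its range in `ρ`. -/
theorem CRepPrec.exists_linearIsometry (h : CRepPrec π ρ) {b : A} (hb : ρ.IsAtom b) :
    Nonempty (π.rangeOf b →ₗᵢ[ℂ] ρ.rangeOf b) := by
  have := hb.finiteDimensional
  set r := Module.finrank ℂ (ρ.rangeOf b)
  have hbound : ∀ (n : ℕ) (ξ : Fin n → H), Orthonormal ℂ ξ → (∀ i, ξ i ∈ π.rangeOf b) →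
      n ≤ r := by
    intro n ξ hξ hmem
    by_contra! hn
    obtain ⟨ζ, hζ, happ⟩ := h {b} n ξ hξ (1 / (n + 1)) (by positivity)
    have hlow : ∀ i, 1 - 1 / (n + 1 : ℝ) ≤ (⟪ρ b (ζ i), ζ i⟫_ℂ).re := by
      intro i
      have h1 := happ b (Finset.mem_singleton_self b) i
      rw [hb.apply_of_mem h.map_eq_zero (hmem i), inner_self_eq_norm_sq_to_K, hξ.1 i] at h1
      have h2 := (Complex.re_le_norm _).trans h1.le
      simp at h2 ⊢
      linarith
    have hsum := (Finset.sum_le_sum fun i (_ : i ∈ Finset.univ) => hlow i).trans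
      (hb.sum_re_inner_le hζ)
    rw [Finset.sum_const, Finset.card_univ, Fintype.card_fin, nsmul_eq_mul] at hsum
    have hn' : (r : ℝ) + 1 ≤ n := by exact_mod_cast hn
    have h3 : (n : ℝ) * (1 / (n + 1)) < 1 := by
      rw [mul_one_div, div_lt_one (by positivity)]; linarith
    linarith
  have hrank : Module.rank ℂ (π.rangeOf b) ≤ r := by
    refine rank_le fun s hs => ?_
    set W := Submodule.span ℂ (s : Set (π.rangeOf b))
    have hW : FiniteDimensional ℂ W := FiniteDimensional.span_finset ℂ s
    have hcard : Module.finrank ℂ W = s.card := finrank_span_finset_eq_card hs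
    rw [← hcard]
    exact hbound _ (fun i => ((stdOrthonormalBasis ℂ W i : π.rangeOf b) : H))
      (((stdOrthonormalBasis ℂ W).orthonormal.comp_linearIsometry W.subtypeₗᵢ).comp_linearIsometry
        (π.rangeOf b).subtypeₗᵢ) (fun i => Subtype.prop _)
  have hfin : FiniteDimensional ℂ (π.rangeOf b) :=
    Module.rank_lt_aleph0_iff.1 (hrank.trans_lt (Cardinal.natCast_lt_aleph0))
  have hle : Module.finrank ℂ (π.rangeOf b) ≤ r := Module.finrank_le_of_rank_le hrank
  set e := stdOrthonormalBasis ℂ (π.rangeOf b)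
  set f := stdOrthonormalBasis ℂ (ρ.rangeOf b)
  refine ⟨(e.toBasis.constr ℂ (fun k => f (Fin.castLE hle k))).isometryOfOrthonormal
    (v := e.toBasis) (by simp [e.orthonormal]) ?_⟩
  have : (e.toBasis.constr ℂ fun k => f (Fin.castLE hle k)) ∘ e.toBasis =
      fun k => f (Fin.castLE hle k) := by
    ext k
    rw [Function.comp_apply, Module.Basis.constr_basis]
  rw [this]
  exact f.orthonormal.comp _ (Fin.castLE_injective hle)

end Rank

section Glimm

/-- A self-adjoint element is a difference of squares of self-adjoint elements whose product
vanishes. -/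
theorem IsSelfAdjoint.exists_eq_mul_self_sub_mul_self {A : Type*} [CStarAlgebra A] {s : A}
    (hs : IsSelfAdjoint s) :
    ∃ c d : A, IsSelfAdjoint c ∧ IsSelfAdjoint d ∧ s = c * c - d * d ∧ d * c = 0 := by
  refine ⟨cfc (fun r : ℝ => √r) s, cfc (fun r : ℝ => √(-r)) s, .cfc, .cfc, ?_, ?_⟩
  · rw [← cfc_mul .., ← cfc_mul .., ← cfc_sub ..]
    conv_lhs => rw [← cfc_id' ℝ s]
    refine cfc_congr fun r _ => ?_
    rcases le_total 0 r with hr | hr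
    · simp [Real.mul_self_sqrt hr, Real.sqrt_eq_zero_of_nonpos (neg_nonpos.2 hr)]
    · simp [Real.mul_self_sqrt (neg_nonneg.2 hr), Real.sqrt_eq_zero_of_nonpos hr]
  · rw [← cfc_mul .., ← cfc_const_zero ℝ s]
    refine cfc_congr fun r _ => ?_
    rcases le_total 0 r with hr | hr
    · simp [Real.sqrt_eq_zero_of_nonpos (neg_nonpos.2 hr)]
    · simp [Real.sqrt_eq_zero_of_nonpos hr]

variable {A H K : Type*} [CStarAlgebra A]
  [NormedAddCommGroup H] [InnerProductSpace ℂ H] [CompleteSpace H]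
  [NormedAddCommGroup K] [InnerProductSpace ℂ K] [CompleteSpace K]

/-- An infinite-dimensional range meets every finite-codimensional subspace. -/
theorem CRep.exists_apply_ne_zero_orthogonal (ρ : CRep A K) {g : A}
    (hg : ¬ FiniteDimensional ℂ (ρ.rangeOf g)) (F : Finset K) :
    ∃ z, ρ g z ≠ 0 ∧ ∀ f ∈ F, ⟪f, ρ g z⟫_ℂ = 0 := by
  by_contra! hcon
  let T : ρ.rangeOf g →ₗ[ℂ] (F → ℂ) :=
    LinearMap.pi fun f => (innerₛₗ ℂ (f : K)).comp (ρ.rangeOf g).subtype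
  refine hg (FiniteDimensional.of_injective T ?_)
  rw [← LinearMap.ker_eq_bot, LinearMap.ker_eq_bot']
  rintro ⟨_, z, rfl⟩ hz
  by_contra hne
  obtain ⟨f, hf, hfz⟩ := hcon z (fun h => hne (Subtype.ext h))
  exact hfz (congrFun hz ⟨f, hf⟩)

/-- The joint numerical range of `Ω` on the unit vectors orthogonal to `F`. -/
def CRep.numRange (ρ : CRep A K) (Ω : Finset A) (F : Finset K) : Set (Ω → ℂ) :=
  {v | ∃ y, ‖y‖ = 1 ∧ (∀ f ∈ F, ⟪f, y⟫_ℂ = 0) ∧ v = fun a : Ω => ⟪y, ρ a y⟫_ℂ}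

theorem CRep.numRange_anti (ρ : CRep A K) (Ω : Finset A) {F G : Finset K} (h : F ⊆ G) :
    ρ.numRange Ω G ⊆ ρ.numRange Ω F := fun _ ⟨y, hy, hyG, hv⟩ =>
  ⟨y, hy, fun f hf => hyG f (h hf), hv⟩

theorem CRep.isBounded_numRange (ρ : CRep A K) (Ω : Finset A) (F : Finset K) :
    Bornology.IsBounded (ρ.numRange Ω F) := by
  refine (Metric.isBounded_closedBall (x := 0) (r := ∑ a : Ω, ‖ρ a‖)).subset ?_
  rintro _ ⟨y, hy, -, rfl⟩
  rw [mem_closedBall_zero_iff, pi_norm_le_iff_of_nonneg (by positivity)]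
  intro a
  calc ‖⟪y, ρ a y⟫_ℂ‖ ≤ ‖y‖ * (‖ρ a‖ * ‖y‖) :=
        (norm_inner_le_norm _ _).trans (by gcongr; exact (ρ a).le_opNorm y)
    _ = ‖ρ a‖ := by simp [hy]
    _ ≤ ∑ a : Ω, ‖ρ a‖ :=
        Finset.single_le_sum (f := fun a : Ω => ‖ρ a‖) (fun _ _ => norm_nonneg _)
          (Finset.mem_univ a)

/-- The essential joint numerical range is convex. -/
theorem CRep.convex_iInter_closure_numRange (ρ : CRep A K) (Ω : Finset A) :
    Convex ℝ (⋂ F : Finset K, closure (ρ.numRange Ω F)) := by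
  classical
  intro v hv w hw s t hs ht hst
  rw [Set.mem_iInter] at hv hw ⊢
  intro F
  rw [Metric.mem_closure_iff]
  intro ε hε
  obtain ⟨_, ⟨y₁, hy₁, hyF₁, rfl⟩, hp⟩ := Metric.mem_closure_iff.1 (hv F) ε hε
  obtain ⟨_, ⟨y₂, hy₂, hyF₂, rfl⟩, hq⟩ := Metric.mem_closure_iff.1
    (hw (F ∪ {y₁} ∪ Ω.image (fun a => ρ a y₁) ∪ Ω.image (fun a => ρ (star a) y₁))) ε hε
  have h12 : ⟪y₁, y₂⟫_ℂ = 0 := hyF₂ y₁ (by simp)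
  have h21 : ⟪y₂, y₁⟫_ℂ = 0 := inner_eq_zero_symm.1 h12
  have ha12 : ∀ a : Ω, ⟪y₁, ρ a y₂⟫_ℂ = 0 := fun a => by
    rw [← ρ.inner_star_left]
    exact hyF₂ _ (Finset.mem_union_right _ (Finset.mem_image_of_mem _ a.2))
  have ha21 : ∀ a : Ω, ⟪y₂, ρ a y₁⟫_ℂ = 0 := fun a => inner_eq_zero_symm.1 <|
    hyF₂ _ (Finset.mem_union_left _ (Finset.mem_union_right _
      (Finset.mem_image_of_mem (fun a => ρ a y₁) a.2)))
  have hss : ((√s : ℝ) : ℂ) * (√s : ℝ) = s := by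
    rw [← Complex.ofReal_mul, Real.mul_self_sqrt hs]
  have htt : ((√t : ℝ) : ℂ) * (√t : ℝ) = t := by
    rw [← Complex.ofReal_mul, Real.mul_self_sqrt ht]
  set y : K := ((√s : ℝ) : ℂ) • y₁ + ((√t : ℝ) : ℂ) • y₂
  have hyy : ⟪y, y⟫_ℂ = 1 := by
    have h11 : ⟪y₁, y₁⟫_ℂ = 1 := by rw [inner_self_eq_norm_sq_to_K, hy₁]; simp
    have h22 : ⟪y₂, y₂⟫_ℂ = 1 := by rw [inner_self_eq_norm_sq_to_K, hy₂]; simp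
    simp only [y, inner_add_left, inner_add_right, inner_smul_left, inner_smul_right, h12, h21,
      h11, h22, Complex.conj_ofReal, mul_zero, add_zero, zero_add, mul_one, hss, htt]
    exact_mod_cast hst
  have hy : ‖y‖ = 1 := by
    have h := inner_self_eq_norm_sq (𝕜 := ℂ) y
    rw [hyy, RCLike.one_re] at h
    exact (pow_eq_one_iff_of_nonneg (norm_nonneg y) two_ne_zero).1 h.symm
  refine ⟨_, ⟨y, hy, fun f hf => ?_, rfl⟩, ?_⟩
  · simp [y, hyF₁ f hf, hyF₂ f (by simp [hf])]
  · have hval : (fun a : Ω => ⟪y, ρ a y⟫_ℂ) =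
        s • (fun a : Ω => ⟪y₁, ρ a y₁⟫_ℂ) + t • (fun a : Ω => ⟪y₂, ρ a y₂⟫_ℂ) := by
      ext a
      simp only [y, map_add, map_smul, inner_add_left, inner_add_right, inner_smul_left,
        inner_smul_right, ha12, ha21, Complex.conj_ofReal, mul_zero, add_zero, zero_add,
        Pi.add_apply, Pi.smul_apply, Complex.real_smul]
      rw [← mul_assoc, ← mul_assoc, hss, htt]
    rw [hval, dist_eq_norm]
    rw [dist_eq_norm, ← mem_ball_zero_iff] at hp hq
    rw [← mem_ball_zero_iff]
    convert convex_ball (0 : Ω → ℂ) ε hp hq hs ht hst using 1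
    module

theorem CRep.re_inner_eq_sub (ρ : CRep A K) {Ω : Finset A} [DecidableEq Ω]
    (f : StrongDual ℂ (Ω → ℂ)) (u : ℝ) {y : K} (hy : ‖y‖ = 1) :
    (⟪y, ρ ((2⁻¹ : ℂ) • (∑ i : Ω, f (Pi.single i 1) • (i : A) +
      star (∑ i : Ω, f (Pi.single i 1) • (i : A))) - (u : ℂ) • 1) y⟫_ℂ).re =
      (f fun i : Ω => ⟪y, ρ i y⟫_ℂ).re - u := by
  set a : A := ∑ i : Ω, f (Pi.single i 1) • (i : A)
  have hfa : (f fun i : Ω => ⟪y, ρ i y⟫_ℂ) = ⟪y, ρ a y⟫_ℂ := by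
    conv_lhs => rw [← Finset.univ_sum_single (fun i : Ω => ⟪y, ρ i y⟫_ℂ), map_sum]
    rw [map_sum, sum_apply, inner_sum]
    refine Finset.sum_congr rfl fun i _ => ?_
    rw [map_smul, smul_apply, inner_smul_right, mul_comm, ← smul_eq_mul, ← map_smul,
      ← Pi.single_smul, smul_eq_mul, mul_one]
  have hstar : ⟪y, ρ (star a) y⟫_ℂ = (starRingEnd ℂ) ⟪y, ρ a y⟫_ℂ := by
    rw [ρ.inner_star_right, inner_conj_symm]
  rw [hfa, map_sub, sub_apply, map_smul, map_add, map_smul, map_one, smul_apply, smul_apply,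
    add_apply, one_apply_eq_self, inner_sub_right, inner_smul_right, inner_smul_right,
    inner_add_right, hstar, Complex.add_conj, inner_self_eq_norm_sq_to_K, hy]
  simp

/-- A vector state which vanishes on all elements of finite rank in `ρ` is approximated by vector
states of `ρ` given by vectors orthogonal to any prescribed finite set. -/
theorem CRep.exists_orthogonal_vector {π : CRep A H} {ρ : CRep A K} {x : H} (hx : ‖x‖ = 1)
    (hfin : ∀ g, FiniteDimensional ℂ (ρ.rangeOf g) → π g x = 0) (Ω : Finset A) (F : Finset K)
    {ε : ℝ} (hε : 0 < ε) :
    ∃ y : K, (∀ f ∈ F, ⟪f, y⟫_ℂ = 0) ∧ ∀ a ∈ Ω, ‖⟪y, ρ a y⟫_ℂ - ⟪x, π a x⟫_ℂ‖ < ε := by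
  classical
  suffices h : (fun a : Ω => ⟪x, π a x⟫_ℂ) ∈ ⋂ F : Finset K, closure (ρ.numRange Ω F) by
    obtain ⟨_, ⟨y, -, hyF, rfl⟩, hdist⟩ := Metric.mem_closure_iff.1 (Set.mem_iInter.1 h F) ε hε
    refine ⟨y, hyF, fun a ha => ?_⟩
    rw [dist_comm, dist_eq_norm] at hdist
    exact (norm_le_pi_norm _ (⟨a, ha⟩ : Ω)).trans_lt hdist
  by_contra hnot
  obtain ⟨f, u, hfu, hux⟩ := RCLike.geometric_hahn_banach_closed_point (𝕜 := ℂ)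
    (ρ.convex_iInter_closure_numRange Ω) (isClosed_iInter fun _ => isClosed_closure) hnot
  -- the self-adjoint element representing the real part of the separating functional
  set a : A := ∑ i : Ω, f (Pi.single i 1) • (i : A)
  set s : A := (2⁻¹ : ℂ) • (a + star a) - (u : ℂ) • 1
  have hs : IsSelfAdjoint s := by
    simp only [s, IsSelfAdjoint, star_sub, star_smul, star_add, star_star, star_one]
    rw [add_comm]
    simp
  obtain ⟨c, d, hc, hd, hscd, hdc⟩ := hs.exists_eq_mul_self_sub_mul_self
  by_cases hρc : FiniteDimensional ℂ (ρ.rangeOf c)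
  · have h0 := hfin c hρc
    have h1 : (⟪x, π s x⟫_ℂ).re ≤ 0 := by
      have : ⟪x, π s x⟫_ℂ = -⟪π d x, π d x⟫_ℂ := by
        rw [hscd, map_sub, sub_apply, π.mul_apply, π.mul_apply, h0, map_zero, zero_sub,
          inner_neg_right, ← π.inner_star_left, hd.star_eq]
      rw [this, Complex.neg_re, neg_nonpos]
      exact inner_self_nonneg (𝕜 := ℂ)
    rw [π.re_inner_eq_sub f u hx] at h1
    exact absurd hux (by simpa using h1)
  · have hne : ∀ G : Finset K, (ρ.numRange Ω G ∩ {v | u ≤ (f v).re}).Nonempty := by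
      intro G
      obtain ⟨z, hz, hzG⟩ := ρ.exists_apply_ne_zero_orthogonal hρc G
      set w : K := (‖ρ c z‖⁻¹ : ℂ) • z
      have hw : ‖ρ c w‖ = 1 := by simp [w, norm_smul, hz]
      refine ⟨_, ⟨ρ c w, hw, fun g hg => ?_, rfl⟩, ?_⟩
      · simp [w, hzG g hg]
      · have h1 : ⟪ρ c w, ρ s (ρ c w)⟫_ℂ = ⟪ρ c (ρ c w), ρ c (ρ c w)⟫_ℂ := by
          rw [hscd, map_sub, sub_apply, ρ.mul_apply, ρ.mul_apply, ← ρ.mul_apply d c, hdc]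
          simp only [map_zero, zero_apply, sub_zero]
          have h := ρ.inner_star_left c (ρ c w) (ρ c (ρ c w))
          rw [hc.star_eq] at h
          exact h.symm
        have h2 : 0 ≤ (⟪ρ c w, ρ s (ρ c w)⟫_ℂ).re := by
          rw [h1]; exact inner_self_nonneg (𝕜 := ℂ)
        rw [ρ.re_inner_eq_sub f u hw] at h2
        simpa using h2
    obtain ⟨v, hv⟩ := IsCompact.nonempty_iInter_of_directed_nonempty_isCompact_isClosed
      (fun G : Finset K => closure (ρ.numRange Ω G ∩ {v | u ≤ (f v).re}))
      (fun G G' => ⟨G ∪ G', closure_mono (Set.inter_subset_inter_left _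
          (ρ.numRange_anti Ω Finset.subset_union_left)),
        closure_mono (Set.inter_subset_inter_left _
          (ρ.numRange_anti Ω Finset.subset_union_right))⟩)
      (fun G => (hne G).closure)
      (fun G => ((ρ.isBounded_numRange Ω G).subset Set.inter_subset_left).isCompact_closure)
      (fun G => isClosed_closure)
    rw [Set.mem_iInter] at hv
    have h1 := hfu v (Set.mem_iInter.2 fun G => closure_mono Set.inter_subset_left (hv G))
    have h2 : u ≤ (f v).re := by
      have hcl : IsClosed {v : Ω → ℂ | u ≤ (f v).re} :=
        isClosed_le continuous_const (Complex.continuous_re.comp f.continuous)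
      exact hcl.closure_subset_iff.2 Set.inter_subset_right (hv ∅)
    exact h1.not_ge h2

end Glimm

/-- A maximal set whose elements are pairwise related by a symmetric relation. -/
theorem exists_maximal_pairwise {α : Type*} (r : α → α → Prop) (hr : ∀ a b, r a b → r b a) :
    ∃ s : Set α, s.Pairwise r ∧ ∀ x, (∀ b ∈ s, r b x) → x ∈ s := by
  obtain ⟨s, hs⟩ := zorn_subset {s : Set α | s.Pairwise r} fun c hc hchain =>
    ⟨⋃₀ c, (Set.pairwise_sUnion hchain.directedOn).2 hc, fun _ => Set.subset_sUnion_of_mem⟩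
  refine ⟨s, hs.prop, fun x hx => ?_⟩
  refine hs.le_of_ge (y := insert x s) ?_ (Set.subset_insert x s) (Set.mem_insert x s)
  exact Set.pairwise_insert.2 ⟨hs.prop, fun b hb _ => ⟨hr _ _ (hx b hb), hx b hb⟩⟩

section Generators

universe u v w

variable {A : Type u} {H : Type v} {K : Type w} [CStarAlgebra A]
  [NormedAddCommGroup H] [InnerProductSpace ℂ H] [CompleteSpace H]
  [NormedAddCommGroup K] [InnerProductSpace ℂ K] [CompleteSpace K]
  {π : CRep A H} {ρ : CRep A K}

/-- A vector annihilated by a maximal family of inequivalent atoms is annihilated by every element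
of finite rank. -/
theorem CRep.apply_eq_zero_of_maximal_atoms (hker : ∀ a, ρ a = 0 → π a = 0)
    {B : Set {b // ρ.IsAtom b}}
    (hB : ∀ b' : {b // ρ.IsAtom b}, (∀ b ∈ B, ∀ a, ρ (b * a * b') = 0) → b' ∈ B) {x : H}
    (hx : ∀ b ∈ B, ∀ c, π (b * c) x = 0) {g : A} (hg : FiniteDimensional ℂ (ρ.rangeOf g)) :
    π g x = 0 := by
  by_contra hne
  obtain ⟨b', hb', c, hc⟩ := CRep.exists_isAtom hker hg hne
  refine hc ?_
  by_cases hmem : ∀ b ∈ B, ∀ a, ρ (b * a * b') = 0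
  · exact hx _ (hB ⟨b', hb'⟩ hmem) c
  push Not at hmem
  obtain ⟨b, hb, a, hv0⟩ := hmem
  set v : A := b * a * b' with hv
  obtain ⟨μ, hμ⟩ := hb'.corner (star a * star (b : A) * (b * a))
  have hvv : ρ (star v * v) = ρ (μ • b') := by
    rw [map_smul, ← hμ, hv, star_mul, star_mul, hb'.isSelfAdjoint.star_eq]
    simp only [mul_assoc]
  have hμ0 : μ ≠ 0 := by
    rintro rfl
    refine hv0 (ContinuousLinearMap.ext fun y => ρ.apply_eq_zero_of_star_mul_self ?_)
    rw [hvv]; simp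
  have h := congrArg (· (π c x)) (CRep.eq_of_eq hker hvv)
  have h0 : π v (π c x) = 0 := by
    rw [← π.mul_apply, hv, mul_assoc, mul_assoc, hx b hb]
  simp only [π.mul_apply, h0, map_zero, map_smul, smul_apply] at h
  rw [π.mul_apply]
  exact (smul_eq_zero.1 h.symm).resolve_left hμ0

theorem CRep.IsAtom.inner_apply_left (hker : ∀ a, ρ a = 0 → π a = 0) {b : A} (hb : ρ.IsAtom b)
    {y : H} (hy : y ∈ π.rangeOf b) (a : A) (z : H) : ⟪y, π a z⟫_ℂ = ⟪y, π (b * a) z⟫_ℂ := by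
  have h := π.inner_star_left b y (π a z)
  rwa [hb.isSelfAdjoint.star_eq, hb.apply_of_mem hker hy, ← π.mul_apply] at h

theorem CRep.IsAtom.inner_apply (hker : ∀ a, ρ a = 0 → π a = 0) {b b' : A} (hb : ρ.IsAtom b)
    (hb' : ρ.IsAtom b') {y y' : H} (hy : y ∈ π.rangeOf b) (hy' : y' ∈ π.rangeOf b') (a : A) :
    ⟪y, π a y'⟫_ℂ = ⟪y, π (b * a * b') y'⟫_ℂ := by
  rw [hb.inner_apply_left hker hy, π.mul_apply (b * a), hb'.apply_of_mem hker hy']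

theorem CRep.IsAtom.inner_apply_self (hker : ∀ a, ρ a = 0 → π a = 0) {b a : A} {c : ℂ}
    (hb : ρ.IsAtom b) (hc : ρ (b * a * b) = c • ρ b) {y y' : H} (hy : y ∈ π.rangeOf b)
    (hy' : y' ∈ π.rangeOf b) : ⟪y, π a y'⟫_ℂ = c * ⟪y, y'⟫_ℂ := by
  rw [← map_smul] at hc
  rw [hb.inner_apply hker hb hy hy', CRep.eq_of_eq hker hc, map_smul, smul_apply,
    inner_smul_right, hb.apply_of_mem hker hy']

/-- Vectors none of whose associated states see elements of finite rank in `ρ` are simultaneously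
approximated by vectors of `K` generating mutually orthogonal subspaces. -/
theorem CRep.exists_orthogonal_family {ι : Type*} {x : ι → H} (hx : ∀ i, ‖x i‖ = 1)
    (hfin : ∀ i g, FiniteDimensional ℂ (ρ.rangeOf g) → π g (x i) = 0) (Ω : Finset A)
    (F : Finset K) {ε : ℝ} (hε : 0 < ε) (T : Finset ι) :
    ∃ y : ι → K, (∀ i ∈ T, ∀ f ∈ F, ⟪f, y i⟫_ℂ = 0) ∧
      (∀ i ∈ T, ∀ a ∈ Ω, ‖⟪y i, ρ a (y i)⟫_ℂ - ⟪x i, π a (x i)⟫_ℂ‖ < ε) ∧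
      ∀ i ∈ T, ∀ j ∈ T, i ≠ j → ∀ a ∈ Ω, ⟪y i, ρ a (y j)⟫_ℂ = 0 := by
  classical
  induction T using Finset.induction_on with
  | empty => exact ⟨0, by simp⟩
  | insert k T hk ih =>
    obtain ⟨y, hyF, hy, hyo⟩ := ih
    obtain ⟨z, hz, hzx⟩ := CRep.exists_orthogonal_vector (hx k) (hfin k) Ω
      (F ∪ (T ×ˢ Ω).image (fun p => ρ p.2 (y p.1)) ∪
        (T ×ˢ Ω).image (fun p => ρ (star p.2) (y p.1))) hε
    have hne : ∀ i ∈ T, i ≠ k := fun i hi h => hk (h ▸ hi)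
    have hz₁ : ∀ i ∈ T, ∀ a ∈ Ω, ⟪ρ a (y i), z⟫_ℂ = 0 := fun i hi a ha => hz _
      (Finset.mem_union_left _ (Finset.mem_union_right _
        (Finset.mem_image_of_mem (fun p : ι × A => ρ p.2 (y p.1))
          (Finset.mk_mem_product hi ha))))
    have hz₂ : ∀ i ∈ T, ∀ a ∈ Ω, ⟪ρ (star a) (y i), z⟫_ℂ = 0 := fun i hi a ha => hz _
      (Finset.mem_union_right _ (Finset.mem_image_of_mem (fun p : ι × A => ρ (star p.2) (y p.1))
        (Finset.mk_mem_product hi ha)))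
    refine ⟨Function.update y k z, ?_, ?_, ?_⟩
    · rw [Finset.forall_mem_insert]
      refine ⟨fun f hf => ?_, fun i hi => ?_⟩
      · rw [Function.update_self]
        exact hz f (by simp [hf])
      · rw [Function.update_of_ne (hne i hi)]
        exact hyF i hi
    · rw [Finset.forall_mem_insert]
      refine ⟨?_, fun i hi => ?_⟩
      · rwa [Function.update_self]
      · rw [Function.update_of_ne (hne i hi)]
        exact hy i hi
    · simp only [Finset.forall_mem_insert]
      refine ⟨⟨fun h => (h rfl).elim, fun j hj _ a ha => ?_⟩, fun i hi =>
        ⟨fun _ a ha => ?_, fun j hj => ?_⟩⟩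
      · rw [Function.update_self, Function.update_of_ne (hne j hj)]
        exact inner_eq_zero_symm.1 (hz₁ j hj a ha)
      · rw [Function.update_self, Function.update_of_ne (hne i hi), ← ρ.inner_star_left]
        exact hz₂ i hi a ha
      · rw [Function.update_of_ne (hne i hi), Function.update_of_ne (hne j hj)]
        exact hyo i hi j hj

/-- Under `π ≺ ρ`, there is a generating family of vectors for `π` whose matrix coefficients are
approximated by those of families of vectors for `ρ`. -/
theorem CRepPrec.exists_generators (h : CRepPrec π ρ) :
    ∃ (ι : Type (max u v)) (x : ι → H), (∀ v, (∀ i a, ⟪π a (x i), v⟫_ℂ = 0) → v = 0) ∧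
      ∀ (T : Finset ι) (Ω : Finset A) (ε : ℝ), 0 < ε → ∃ y : ι → K,
        ∀ i ∈ T, ∀ j ∈ T, ∀ a ∈ Ω, ‖⟪y i, ρ a (y j)⟫_ℂ - ⟪x i, π a (x j)⟫_ℂ‖ < ε := by
  classical
  have hker := h.map_eq_zero
  obtain ⟨B, hBp, hBm⟩ := exists_maximal_pairwise
    (fun b b' : {b // ρ.IsAtom b} => ∀ a, ρ (b * a * b') = 0) (fun b b' hbb a => by
      have h := congrArg star (hbb (star a))
      rwa [← map_star, star_mul, star_mul, star_star, b.2.isSelfAdjoint.star_eq,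
        b'.2.isSelfAdjoint.star_eq, star_zero, ← mul_assoc] at h)
  have inner_symm : ∀ {z z' : H}, (∀ a, ⟪z, π a z'⟫_ℂ = 0) → ∀ a, ⟪z', π a z⟫_ℂ = 0 := by
    intro z z' hzz a
    rw [← inner_eq_zero_symm, ← π.inner_star_right]
    exact hzz (star a)
  obtain ⟨Z, hZp, hZm⟩ := exists_maximal_pairwise
    (fun z z' : {x : H // ‖x‖ = 1 ∧ ∀ b ∈ B, ∀ c, π (b * c) x = 0} =>
      ∀ a, ⟪(z : H), π a z'⟫_ℂ = 0) (fun z z' => inner_symm)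
  have hcross : ∀ {b} (_ : b ∈ B) {y} (_ : y ∈ π.rangeOf (b : A)) (z : Z) (a : A),
      ⟪y, π a z⟫_ℂ = 0 := by
    intro b hb y hy z a
    rw [b.2.inner_apply_left hker hy, z.1.2.2 b hb, inner_zero_right]
  have U : ∀ b : {b // ρ.IsAtom b}, π.rangeOf (b : A) →ₗᵢ[ℂ] ρ.rangeOf (b : A) := fun b =>
    (h.exists_linearIsometry b.2).some
  refine ⟨(Σ b : B, π.rangeOf (b : A)) ⊕ Z, Sum.elim (fun p => (p.2 : H)) (fun z => (z : H)),
    fun v hv => ?_, fun T Ω ε hε => ?_⟩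
  · have hvB : ∀ b ∈ B, ∀ c, π (b * c) v = 0 := by
      intro b hb c
      have hmem : π (b * c) v ∈ π.rangeOf (b : A) := ⟨π c v, by simp⟩
      have h1 := hv (.inl ⟨⟨b, hb⟩, ⟨_, hmem⟩⟩) (star c)
      rw [Sum.elim_inl, π.inner_star_left, b.2.inner_apply_left hker hmem] at h1
      exact inner_self_eq_zero.1 h1
    by_contra hv0
    set v₀ : H := (‖v‖⁻¹ : ℂ) • v
    have hmem := hZm ⟨v₀, by simp [v₀, norm_smul, hv0], fun b hb c => by
      rw [map_smul, hvB b hb c, smul_zero]⟩ (fun z hz a => by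
        have := hv (.inr ⟨z, hz⟩) (star a)
        rw [Sum.elim_inr, π.inner_star_left] at this
        simp [v₀, this])
    have := hv (.inr ⟨_, hmem⟩) 1
    simp [v₀, hv0] at this
  · set y₀ : (Σ b : B, π.rangeOf (b : A)) → K := fun p => (U p.1 p.2 : K)
    set F : Finset K := (T.toLeft ×ˢ Ω).image (fun p => ρ p.2 (y₀ p.1)) ∪
      (T.toLeft ×ˢ Ω).image (fun p => ρ (star p.2) (y₀ p.1))
    obtain ⟨y, hyF, hy, hyo⟩ := CRep.exists_orthogonal_family (x := fun z : Z => (z : H))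
      (fun z => z.1.2.1)
      (fun z g hg => CRep.apply_eq_zero_of_maximal_atoms hker hBm z.1.2.2 hg) Ω F hε T.toRight
    refine ⟨Sum.elim y₀ y, ?_⟩
    rintro (⟨b, p⟩ | z) hi (⟨b', p'⟩ | z') hj a ha
    · suffices heq : ⟪y₀ ⟨b, p⟩, ρ a (y₀ ⟨b', p'⟩)⟫_ℂ = ⟪(p : H), π a p'⟫_ℂ by
        simpa [heq] using hε
      by_cases hbb : b = b'
      · subst hbb
        obtain ⟨c, hc⟩ := b.1.2.corner a
        rw [b.1.2.inner_apply_self (fun _ h => h) hc (Subtype.prop _) (Subtype.prop _),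
          b.1.2.inner_apply_self hker hc p.2 p'.2]
        congr 1
        exact (U b).inner_map_map p p'
      · have h0 := hBp b.2 b'.2 (fun h => hbb (Subtype.ext h)) a
        rw [b.1.2.inner_apply (fun _ h => h) b'.1.2 (Subtype.prop _) (Subtype.prop _),
          b.1.2.inner_apply hker b'.1.2 p.2 p'.2, h0, hker _ h0]
        simp
    · have h1 : ⟪y₀ ⟨b, p⟩, ρ a (y z')⟫_ℂ = 0 := by
        rw [← ρ.inner_star_left]
        exact hyF z' (by simpa using hj) _ (Finset.mem_union_right _ (Finset.mem_image_of_mem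
          (fun p : _ × A => ρ (star p.2) (y₀ p.1))
          (Finset.mk_mem_product (Finset.mem_toLeft.2 hi) ha)))
      simpa [h1, hcross b.2 p.2] using hε
    · have h1 : ⟪y z, ρ a (y₀ ⟨b', p'⟩)⟫_ℂ = 0 := inner_eq_zero_symm.1 <|
        hyF z (by simpa using hi) _ (Finset.mem_union_left _ (Finset.mem_image_of_mem
          (fun p : _ × A => ρ p.2 (y₀ p.1)) (Finset.mk_mem_product (Finset.mem_toLeft.2 hj) ha)))
      simpa [h1, inner_symm (hcross b'.2 p'.2 z) a] using hε
    · by_cases hzz : z = z'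
      · subst hzz
        exact hy z (by simpa using hi) a ha
      · have h1 := hyo z (by simpa using hi) z' (by simpa using hj) hzz a ha
        have h2 := hZp z.2 z'.2 (fun h => hzz (Subtype.ext h)) a
        simpa [h1, h2] using hε

end Generators

section Approximation

variable {A H K : Type*} [CStarAlgebra A]
  [NormedAddCommGroup H] [InnerProductSpace ℂ H] [CompleteSpace H]
  [NormedAddCommGroup K] [InnerProductSpace ℂ K] [CompleteSpace K]
  {π : CRep A H} {ρ : CRep A K}

/-- Linear combinations of the vectors `π a (x i)` are dense if only the zero vector is orthogonal
to all of them. -/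
theorem CRep.exists_linearCombination_norm_sub_lt {ι : Type*} {x : ι → H}
    (hx : ∀ v, (∀ i a, ⟪π a (x i), v⟫_ℂ = 0) → v = 0) (v : H) {δ : ℝ} (hδ : 0 < δ) :
    ∃ c : A × ι →₀ ℂ, ‖v - c.linearCombination ℂ (fun p => π p.1 (x p.2))‖ < δ := by
  set W := Submodule.span ℂ (Set.range fun p : A × ι => π p.1 (x p.2))
  have hW : W.topologicalClosure = ⊤ := by
    rw [Submodule.topologicalClosure_eq_top_iff, Submodule.eq_bot_iff]
    exact fun w hw => hx w fun i a => hw _ (Submodule.subset_span ⟨(a, i), rfl⟩)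
  have hv : v ∈ closure (W : Set H) := by
    rw [← Submodule.topologicalClosure_coe, hW]; trivial
  obtain ⟨w, hw, hvw⟩ := Metric.mem_closure_iff.1 hv δ hδ
  obtain ⟨c, rfl⟩ := Finsupp.mem_span_range_iff_exists_finsupp.1 hw
  exact ⟨c, by rwa [dist_eq_norm] at hvw⟩

/-- Under `π ≺ ρ`, unitary conjugates of `ρ` approximate `π` on finitely many elements and
vectors. -/
theorem CRepPrec.exists_linearIsometryEquiv_norm_sub_lt [TopologicalSpace.SeparableSpace H]
    [TopologicalSpace.SeparableSpace K] (hH : ¬ FiniteDimensional ℂ H)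
    (hK : ¬ FiniteDimensional ℂ K) (h : CRepPrec π ρ) (Ω : Finset A) (V : Finset H) {ε : ℝ}
    (hε : 0 < ε) :
    ∃ u : K ≃ₗᵢ[ℂ] H, ∀ a ∈ Ω, ∀ v ∈ V, ‖u (ρ a (u.symm v)) - π a v‖ < ε := by
  classical
  obtain ⟨ι, x, hx, hxy⟩ := h.exists_generators
  set M : ℝ := ∑ a ∈ Ω, (‖ρ a‖ + ‖π a‖)
  have hM : ∀ a ∈ Ω, ‖ρ a‖ + ‖π a‖ ≤ M := fun a ha =>
    Finset.single_le_sum (f := fun a => ‖ρ a‖ + ‖π a‖) (fun _ _ => by positivity) ha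
  have hM0 : 0 ≤ M := Finset.sum_nonneg fun _ _ => by positivity
  choose c hc using fun v => CRep.exists_linearCombination_norm_sub_lt hx v
    (show 0 < ε / (M + 1) by positivity)
  choose y hy using fun p : Finset ι × Finset A × ℕ =>
    hxy p.1 p.2.1 (1 / (p.2.2 + 1)) (by positivity)
  have hlim : ∀ i j a, Tendsto (fun p => ⟪y p i, ρ a (y p j)⟫_ℂ) atTop
      (𝓝 ⟪x i, π a (x j)⟫_ℂ) := by
    intro i j a
    rw [Metric.tendsto_atTop]
    intro δ hδ
    obtain ⟨n, hn⟩ := exists_nat_one_div_lt hδ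
    refine ⟨({i, j}, {a}, n), fun p hp => ?_⟩
    rw [dist_eq_norm]
    refine (hy p i (hp.1 (by simp)) j (hp.1 (by simp)) a (hp.2.1 (by simp))).trans
      (lt_of_le_of_lt ?_ hn)
    exact Nat.one_div_le_one_div hp.2.2
  set D : Finset (A × ι) := V.biUnion (fun v => (c v).support) ∪
    (Ω ×ˢ V).biUnion (fun q => (c q.2).support.image (fun p => (q.1 * p.1, p.2)))
  obtain ⟨u, hu⟩ := exists_linearIsometryEquiv_tendsto_of_tendsto_inner hH hK (l := atTop)
    (g := fun p : D => π p.1.1 (x p.1.2)) (h := fun t (p : D) => ρ p.1.1 (y t p.1.2))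
    (fun p q => by
      simpa only [CRep.mul_apply, CRep.inner_star_right] using
        hlim p.1.2 q.1.2 (star p.1.1 * q.1.1))
  set w : H → Finset ι × Finset A × ℕ → K := fun v t =>
    (c v).linearCombination ℂ (fun p => ρ p.1 (y t p.2))
  set v' : H → H := fun v => (c v).linearCombination ℂ (fun p => π p.1 (x p.2))
  have hw : ∀ v ∈ V, Tendsto (fun t => u t (w v t)) atTop (𝓝 (v' v)) := by
    intro v hv
    simp only [w, v', Finsupp.linearCombination_apply, Finsupp.sum, map_sum, map_smul]
    refine tendsto_finsetSum _ fun p hp => (hu ⟨p, ?_⟩).const_smul _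
    exact Finset.mem_union_left _ (Finset.mem_biUnion.2 ⟨v, hv, hp⟩)
  have haw : ∀ a ∈ Ω, ∀ v ∈ V, Tendsto (fun t => u t (ρ a (w v t))) atTop (𝓝 (π a (v' v))) := by
    intro a ha v hv
    simp only [w, v', Finsupp.linearCombination_apply, Finsupp.sum, map_sum, map_smul,
      ← CRep.mul_apply]
    refine tendsto_finsetSum _ fun p hp => (hu ⟨(a * p.1, p.2), ?_⟩).const_smul _
    exact Finset.mem_union_right _ (Finset.mem_biUnion.2 ⟨(a, v), Finset.mk_mem_product ha hv,
      Finset.mem_image_of_mem (fun p : A × ι => (a * p.1, p.2)) hp⟩)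
  have hev : ∀ a ∈ Ω, ∀ v ∈ V, ∀ᶠ t in atTop, ‖u t (ρ a ((u t).symm v)) - π a v‖ < ε := by
    intro a ha v hv
    have h1 : Tendsto (fun t => ‖ρ a‖ * ‖v - u t (w v t)‖ +
        ‖u t (ρ a (w v t)) - π a (v' v)‖ + ‖π a‖ * ‖v - v' v‖) atTop
        (𝓝 (‖ρ a‖ * ‖v - v' v‖ + ‖π a (v' v) - π a (v' v)‖ + ‖π a‖ * ‖v - v' v‖)) :=
      ((((hw v hv).const_sub v).norm.const_mul _).add
        ((haw a ha v hv).sub_const _).norm).add_const _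
    have h2 : ‖ρ a‖ * ‖v - v' v‖ + ‖π a (v' v) - π a (v' v)‖ + ‖π a‖ * ‖v - v' v‖ < ε := by
      calc _ = (‖ρ a‖ + ‖π a‖) * ‖v - v' v‖ := by rw [sub_self, norm_zero]; ring
        _ ≤ M * (ε / (M + 1)) := by gcongr; exacts [hM a ha, (hc v).le]
        _ < ε := by
          rw [mul_div_assoc', div_lt_iff₀ (by positivity)]
          nlinarith
    filter_upwards [h1.eventually_lt_const h2] with t ht
    refine lt_of_le_of_lt ?_ ht
    have h3 : u t (ρ a ((u t).symm v)) - π a v = u t (ρ a ((u t).symm (v - u t (w v t)))) +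
        (u t (ρ a (w v t)) - π a (v' v)) + (-π a (v - v' v)) := by
      simp only [map_sub, LinearIsometryEquiv.symm_apply_apply]
      abel
    rw [h3]
    refine norm_add₃_le.trans ?_
    gcongr
    · rw [LinearIsometryEquiv.norm_map]
      exact ((ρ a).le_opNorm _).trans_eq (by rw [LinearIsometryEquiv.norm_map])
    · rw [norm_neg]
      exact (π a).le_opNorm _
  obtain ⟨t, ht⟩ := (((Finset.eventually_all Ω).2 fun a ha =>
    (Finset.eventually_all V).2 fun v hv => hev a ha v hv)).exists
  exact ⟨u t, ht⟩

theorem CRep.isInducing_coe :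
    IsInducing (fun (π : CRep A H) => (fun (a : A) (x : H) => π a x)) := ⟨rfl⟩

theorem CRep.continuous_apply_apply (a : A) (x : H) : Continuous fun π : CRep A H => π a x :=
  (continuous_apply x).comp ((continuous_apply a).comp CRep.isInducing_coe.continuous)

end Approximation

/-- for unital representations `π : A → B(H)` and `ρ : A → B(K)` of a separable
unital C*-algebra on separable infinite-dimensional Hilbert spaces, `π ≺ ρ` if and only if
`π` lies in the point-strong closure of the set of representations on `H` unitarily
equivalent to `ρ`. -/
theorem prec_iff_mem_closure_unitary_conjugates
    {A H K : Type*} [CStarAlgebra A] [TopologicalSpace.SeparableSpace A]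
    [NormedAddCommGroup H] [InnerProductSpace ℂ H] [CompleteSpace H]
    [TopologicalSpace.SeparableSpace H]
    [NormedAddCommGroup K] [InnerProductSpace ℂ K] [CompleteSpace K]
    [TopologicalSpace.SeparableSpace K]
    (hH : ¬ FiniteDimensional ℂ H) (hK : ¬ FiniteDimensional ℂ K)
    (π : CRep A H) (ρ : CRep A K) :
    CRepPrec π ρ ↔
      π ∈ closure {κ : CRep A H |
        ∃ u : K ≃ₗᵢ[ℂ] H, ∀ (a : A) (x : K), κ a (u x) = u (ρ a x)} := by
  classical
  refine ⟨fun h => ?_, fun h Ω n ξ hξ ε hε => ?_⟩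
  · choose u hu using fun p : Finset A × Finset H × ℕ =>
      h.exists_linearIsometryEquiv_norm_sub_lt hH hK p.1 p.2.1
        (show (0 : ℝ) < 1 / (p.2.2 + 1) by positivity)
    refine mem_closure_of_tendsto (b := atTop)
      (f := fun p => (u p).conjStarAlgEquiv.toStarAlgHom.comp ρ) ?_
      (.of_forall fun p => ⟨u p, fun a x => by simp⟩)
    rw [CRep.isInducing_coe.tendsto_nhds_iff, tendsto_pi_nhds]
    refine fun a => tendsto_pi_nhds.2 fun v => ?_
    rw [Metric.tendsto_atTop]
    intro δ hδ
    obtain ⟨n, hn⟩ := exists_nat_one_div_lt hδ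
    refine ⟨({a}, {v}, n), fun p hp => ?_⟩
    rw [dist_eq_norm]
    exact (hu p a (hp.1 (by simp)) v (hp.2.1 (by simp))).trans_le
      ((Nat.one_div_le_one_div hp.2.2).trans hn.le)
  · have hopen : IsOpen {κ : CRep A H | ∀ a ∈ Ω, ∀ i,
        ‖⟪π a (ξ i), ξ i⟫_ℂ - ⟪κ a (ξ i), ξ i⟫_ℂ‖ < ε} := by
      simp only [Set.ofPred_forall]
      refine isOpen_biInter_finset fun a _ => isOpen_iInter_of_finite fun i => ?_
      exact isOpen_lt (continuous_const.sub
        ((CRep.continuous_apply_apply a (ξ i)).inner continuous_const)).norm continuous_const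
    obtain ⟨κ, hκ, u, hu⟩ := mem_closure_iff.1 h _ hopen (by simpa using fun _ _ _ => hε)
    refine ⟨fun i => u.symm (ξ i), hξ.comp_linearIsometryEquiv u.symm, fun a ha i => ?_⟩
    have h1 := hu a (u.symm (ξ i))
    rw [u.apply_symm_apply] at h1
    have h2 := hκ a ha i
    have h3 := u.inner_map_map (ρ a (u.symm (ξ i))) (u.symm (ξ i))
    rw [u.apply_symm_apply] at h3
    rwa [h1, h3] at h2
end
end

section
/- Let A be a separable unital C*-algebra, let H₀ be a nonzero finite-dimensional Hilbert space, let Y = Irr(A,H₀) with its point-strong (equivalently point-norm) topology and Borel σ-algebra, and let μ be a Borel probability measure on Y such that μ(C) = 0 for every unitary equivalence class C ⊆ Y. Define θ : A → B(L²(Y,μ;H₀)) by (θ(a)ζ)(π) = π(a)(ζ(π)) for a ∈ A, ζ ∈ L²(Y,μ;H₀), π ∈ Y. Then θ is a unital representation of A and θ is weakly mixing. -/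
open scoped InnerProductSpace

noncomputable section

/-- A unital representation is irreducible if its only closed invariant subspaces are `⊥`
and the whole space. -/
def CRepIrreducible {A H : Type*} [CStarAlgebra A] [NormedAddCommGroup H]
    [InnerProductSpace ℂ H] [CompleteSpace H] (π : CRep A H) : Prop :=
  ∀ K : Submodule ℂ H, IsClosed (K : Set H) → (∀ a : A, ∀ x ∈ K, π a x ∈ K) →
    K = ⊥ ∨ K = ⊤

/-- A closed subspace `K` is invariant under a unital representation `π`. -/
def CRepInvariant {A H : Type*} [CStarAlgebra A] [NormedAddCommGroup H]
    [InnerProductSpace ℂ H] [CompleteSpace H]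
    (π : CRep A H) (K : Submodule ℂ H) : Prop :=
  ∀ a : A, ∀ x ∈ K, π a x ∈ K

/-- A unital representation is weakly mixing if it admits no nonzero finite-dimensional
closed invariant subspace. -/
def CRepWeaklyMixing {A H : Type*} [CStarAlgebra A] [NormedAddCommGroup H]
    [InnerProductSpace ℂ H] [CompleteSpace H]
    (π : CRep A H) : Prop :=
  ∀ K : Submodule ℂ H, IsClosed (K : Set H) → FiniteDimensional ℂ K →
    CRepInvariant π K → K = ⊥

/-- The space `Irr(A,H)` of irreducible representations, with the (subspace) point-strong
operator topology. -/
abbrev IrrRep (A H : Type*) [CStarAlgebra A] [NormedAddCommGroup H]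
    [InnerProductSpace ℂ H] [CompleteSpace H] : Type _ :=
  {π : CRep A H // CRepIrreducible π}

/-- `Irr(A,H)` carries the Borel σ-algebra of the point-strong operator topology. -/
instance IrrRep.instMeasurableSpace (A H : Type*) [CStarAlgebra A] [NormedAddCommGroup H]
    [InnerProductSpace ℂ H] [CompleteSpace H] : MeasurableSpace (IrrRep A H) :=
  borel _

instance IrrRep.instBorelSpace (A H : Type*) [CStarAlgebra A] [NormedAddCommGroup H]
    [InnerProductSpace ℂ H] [CompleteSpace H] : BorelSpace (IrrRep A H) :=
  ⟨rfl⟩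

open MeasureTheory

section Algebraic

variable {A H G : Type*} [CStarAlgebra A]
  [NormedAddCommGroup H] [InnerProductSpace ℂ H] [CompleteSpace H]
  [NormedAddCommGroup G] [InnerProductSpace ℂ G] [CompleteSpace G]

/-- A nonzero finite-dimensional invariant subspace contains a minimal one. -/
theorem CRepInvariant.exists_minimal {θ : CRep A H} {K : Submodule ℂ H}
    (hK : FiniteDimensional ℂ K) (hinv : CRepInvariant θ K) (hne : K ≠ ⊥) :
    ∃ L : Submodule ℂ H, FiniteDimensional ℂ L ∧ CRepInvariant θ L ∧ L ≠ ⊥ ∧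
      ∀ M ≤ L, CRepInvariant θ M → M = ⊥ ∨ M = L := by
  induction hn : Module.finrank ℂ K using Nat.strong_induction_on generalizing K with
  | _ n ih =>
    by_cases hmin : ∀ M ≤ K, CRepInvariant θ M → M = ⊥ ∨ M = K
    · exact ⟨K, hK, hinv, hne, hmin⟩
    · push Not at hmin
      obtain ⟨M, hMK, hMinv, hM0, hMne⟩ := hmin
      exact ih _ (hn ▸ Submodule.finrank_lt_finrank_of_lt (lt_of_le_of_ne hMK hMne))
        (Submodule.finiteDimensional_of_le hMK) hMinv hM0 rfl

/-- Similar irreducible representations on a finite-dimensional space are unitarily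
equivalent. -/
theorem CRepIrreducible.exists_unitary_of_similar [FiniteDimensional ℂ H] [Nontrivial H]
    {σ κ : CRep A H} (hσ : CRepIrreducible σ) (S : H ≃ₗ[ℂ] H)
    (hS : ∀ a x, κ a (S x) = S (σ a x)) :
    ∃ Z : H ≃ₗᵢ[ℂ] H, ∀ a x, κ a (Z x) = Z (σ a x) := by
  set T : H →L[ℂ] H := LinearMap.toContinuousLinearMap (S : H →ₗ[ℂ] H)
  have hTS : ∀ x, T x = S x := fun x => rfl
  set P : H →L[ℂ] H := T.adjoint * T with hP
  have hcomm : ∀ a x, P (σ a x) = σ a (P x) := by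
    intro a x
    refine ext_inner_right ℂ fun z => ?_
    have h1 : inner ℂ (P (σ a x)) z = inner ℂ (T x) (κ (star a) (T z)) := by
      rw [hP, mul_apply_eq_comp, ContinuousLinearMap.adjoint_inner_left, hTS (σ a x),
        ← hS, map_star, ContinuousLinearMap.star_eq_adjoint,
        ContinuousLinearMap.adjoint_inner_right]
      rfl
    have h2 : inner ℂ (σ a (P x)) z = inner ℂ (T x) (T (σ (star a) z)) := by
      rw [map_star, ContinuousLinearMap.star_eq_adjoint, ← ContinuousLinearMap.adjoint_inner_left T,
        ContinuousLinearMap.adjoint_inner_right]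
      rfl
    rw [h1, h2, hTS z, hTS (σ (star a) z), hS]
  obtain ⟨c, hc⟩ := Module.End.exists_eigenvalue (P : H →ₗ[ℂ] H)
  have htop : Module.End.eigenspace (P : H →ₗ[ℂ] H) c = ⊤ := by
    refine (hσ _ (Submodule.closed_of_finiteDimensional _) fun a x hx => ?_).resolve_left hc
    rw [Module.End.mem_eigenspace_iff] at hx ⊢
    simp only [ContinuousLinearMap.coe_coe] at hx ⊢
    rw [hcomm, hx, map_smul]
  have hPx : ∀ x, P x = c • x := fun x => by
    have : x ∈ Module.End.eigenspace (P : H →ₗ[ℂ] H) c := htop ▸ Submodule.mem_top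
    simpa [Module.End.mem_eigenspace_iff] using this
  have hnorm : ∀ x, ‖S x‖ ^ 2 = c.re * ‖x‖ ^ 2 := by
    intro x
    have h1 : inner ℂ x (P x) = ((‖S x‖ ^ 2 : ℝ) : ℂ) := by
      rw [hP, mul_apply_eq_comp, ContinuousLinearMap.adjoint_inner_right, hTS,
        inner_self_eq_norm_sq_to_K]
      simp
    rw [hPx, inner_smul_right, inner_self_eq_norm_sq_to_K] at h1
    have h2 := congrArg Complex.re h1
    rw [Complex.ofReal_re] at h2
    rw [← h2, ← RCLike.ofReal_pow]
    exact Complex.re_mul_ofReal _ _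
  have hcpos : 0 < c.re := by
    obtain ⟨x, hx⟩ := exists_ne (0 : H)
    have h1 : 0 < ‖S x‖ ^ 2 := pow_pos (norm_pos_iff.2 (by simpa using hx)) 2
    rw [hnorm] at h1
    exact pos_of_mul_pos_left h1 (by positivity)
  set r : ℂ := (((Real.sqrt c.re)⁻¹ : ℝ) : ℂ) with hr
  let Z : H →ₗᵢ[ℂ] H :=
    { toLinearMap := r • (S : H →ₗ[ℂ] H)
      norm_map' := fun x => by
        have h3 : ‖S x‖ = Real.sqrt c.re * ‖x‖ := by
          rw [← Real.sqrt_sq (norm_nonneg (S x)), hnorm, Real.sqrt_mul hcpos.le,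
            Real.sqrt_sq (norm_nonneg x)]
        have h4 : Real.sqrt c.re ≠ 0 := (Real.sqrt_pos.2 hcpos).ne'
        rw [LinearMap.smul_apply, norm_smul, LinearEquiv.coe_coe, h3, hr, Complex.norm_real,
          Real.norm_of_nonneg (by positivity), inv_mul_cancel_left₀ h4] }
  refine ⟨Z.toLinearIsometryEquiv rfl, fun a x => ?_⟩
  change κ a (r • S x) = r • S (σ a x)
  rw [map_smul, hS]

/-- A nonzero intertwiner from a minimal invariant subspace to an irreducible representation is
bijective. -/
theorem CRepIrreducible.bijective_of_intertwines [FiniteDimensional ℂ G]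
    {θ : CRep A H} {κ : CRep A G}
    (hκ : CRepIrreducible κ) {K : Submodule ℂ H} (hinv : CRepInvariant θ K)
    (hmin : ∀ M ≤ K, CRepInvariant θ M → M = ⊥ ∨ M = K) (T : K →ₗ[ℂ] G)
    (hT : ∀ a (k : K), T ⟨θ a k, hinv a k k.2⟩ = κ a (T k)) (hT0 : T ≠ 0) :
    Function.Bijective T := by
  constructor
  · rw [← LinearMap.ker_eq_bot]
    have h := hmin (T.ker.map K.subtype) (Submodule.map_subtype_le _ _) (by
      rintro a _ ⟨k, hk, rfl⟩
      refine ⟨⟨θ a k, hinv a k k.2⟩, ?_, rfl⟩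
      have hk' : T k = 0 := hk
      change T _ = 0
      rw [hT, hk', map_zero])
    rcases h with h | h
    · exact Submodule.map_injective_of_injective K.injective_subtype
        (h.trans (Submodule.map_bot _).symm)
    · refine absurd (LinearMap.ext fun k => ?_) hT0
      have hk : (k : H) ∈ T.ker.map K.subtype := h.symm.le k.2
      obtain ⟨k', hk', he⟩ := hk
      rw [← Subtype.ext he]
      exact hk'
  · rw [← LinearMap.range_eq_top]
    refine (hκ _ (Submodule.closed_of_finiteDimensional _) ?_).resolve_left
      (fun h => hT0 (LinearMap.range_eq_bot.1 h))
    rintro a _ ⟨k, rfl⟩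
    exact ⟨_, hT a k⟩

end Algebraic

section PointwiseAction

variable {A H₀ : Type*} [CStarAlgebra A]
  [NormedAddCommGroup H₀] [InnerProductSpace ℂ H₀] [CompleteSpace H₀]

theorem IrrRep.continuous_eval (a : A) (x : H₀) :
    Continuous fun y : IrrRep A H₀ => (y : CRep A H₀) a x := by
  have h : Continuous fun π : CRep A H₀ => fun (a : A) (x : H₀) => π a x :=
    continuous_induced_dom
  exact ((continuous_apply x).comp ((continuous_apply a).comp h)).comp continuous_subtype_val

theorem CRep.norm_apply_apply_le (π : CRep A H₀) (a : A) (x : H₀) : ‖π a x‖ ≤ ‖a‖ * ‖x‖ :=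
  (π a).le_of_opNorm_le (NonUnitalStarAlgHom.norm_apply_le π a) x

variable [FiniteDimensional ℂ H₀] {μ : Measure (IrrRep A H₀)}

theorem IrrRep.aestronglyMeasurable_apply (a : A) {ζ : IrrRep A H₀ → H₀}
    (hζ : AEStronglyMeasurable ζ μ) :
    AEStronglyMeasurable (fun y : IrrRep A H₀ => (y : CRep A H₀) a (ζ y)) μ := by
  have : ProperSpace H₀ := FiniteDimensional.proper ℂ H₀
  let b := stdOrthonormalBasis ℂ H₀
  have h : (fun y : IrrRep A H₀ => (y : CRep A H₀) a (ζ y)) =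
      fun y => ∑ i, inner ℂ (b i) (ζ y) • (y : CRep A H₀) a (b i) := by
    funext y
    conv_lhs => rw [← b.sum_repr' (ζ y)]
    simp [map_sum]
  rw [h]
  refine Finset.aestronglyMeasurable_fun_sum _ fun i _ => ?_
  exact (AEStronglyMeasurable.inner aestronglyMeasurable_const hζ).smul
    (IrrRep.continuous_eval a (b i)).aestronglyMeasurable

theorem IrrRep.memLp_apply (a : A) (ζ : Lp H₀ 2 μ) :
    MemLp (fun y : IrrRep A H₀ => (y : CRep A H₀) a (ζ y)) 2 μ :=
  (Lp.memLp ζ).of_le_mul (IrrRep.aestronglyMeasurable_apply a (Lp.aestronglyMeasurable ζ))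
    (ae_of_all _ fun y => CRep.norm_apply_apply_le (y : CRep A H₀) a (ζ y))

variable (μ) in
/-- The operator `(θ(a)ζ)(π) = π(a)(ζ(π))` on `L²`. -/
def IrrRep.pointwiseOp (a : A) : Lp H₀ 2 μ →L[ℂ] Lp H₀ 2 μ :=
  LinearMap.mkContinuous
    { toFun := fun ζ => (IrrRep.memLp_apply a ζ).toLp
      map_add' := fun ζ η => by
        rw [← MemLp.toLp_add, MemLp.toLp_eq_toLp_iff]
        filter_upwards [Lp.coeFn_add ζ η] with y hy
        rw [hy, Pi.add_apply, map_add, Pi.add_apply]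
      map_smul' := fun c ζ => by
        rw [RingHom.id_apply, ← MemLp.toLp_const_smul, MemLp.toLp_eq_toLp_iff]
        filter_upwards [Lp.coeFn_smul c ζ] with y hy
        rw [hy, Pi.smul_apply, map_smul, Pi.smul_apply] }
    ‖a‖ fun ζ => by
      refine Lp.norm_le_mul_norm_of_ae_le_mul ?_
      filter_upwards [(IrrRep.memLp_apply a ζ).coeFn_toLp] with y hy
      simp only [LinearMap.coe_mk, AddHom.coe_mk]
      rw [hy]
      exact CRep.norm_apply_apply_le (y : CRep A H₀) a (ζ y)

theorem IrrRep.coeFn_pointwiseOp (a : A) (ζ : Lp H₀ 2 μ) :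
    (IrrRep.pointwiseOp μ a ζ : IrrRep A H₀ → H₀) =ᵐ[μ] fun y => (y : CRep A H₀) a (ζ y) :=
  (IrrRep.memLp_apply a ζ).coeFn_toLp

theorem IrrRep.pointwiseOp_algebraMap (c : ℂ) :
    IrrRep.pointwiseOp μ (algebraMap ℂ A c) = algebraMap ℂ (Lp H₀ 2 μ →L[ℂ] Lp H₀ 2 μ) c := by
  refine ContinuousLinearMap.ext fun ζ => Lp.ext ?_
  rw [Algebra.algebraMap_eq_smul_one, Algebra.algebraMap_eq_smul_one]
  filter_upwards [IrrRep.coeFn_pointwiseOp (c • (1 : A)) ζ, Lp.coeFn_smul c ζ] with y h1 h2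
  rw [h1, smul_apply, one_apply_eq_self, h2]
  simp

variable (μ) in
/-- The unital representation `θ` of `A` on `L²` acting by `(θ(a)ζ)(π) = π(a)(ζ(π))`. -/
def IrrRep.pointwiseRep : CRep A (Lp H₀ 2 μ) where
  toFun := IrrRep.pointwiseOp μ
  map_one' := by simpa using IrrRep.pointwiseOp_algebraMap (A := A) (μ := μ) 1
  map_mul' a b := by
    refine ContinuousLinearMap.ext fun ζ => Lp.ext ?_
    filter_upwards [IrrRep.coeFn_pointwiseOp (a * b) ζ, IrrRep.coeFn_pointwiseOp b ζ,
      IrrRep.coeFn_pointwiseOp a (IrrRep.pointwiseOp μ b ζ)] with y h1 h2 h3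
    rw [h1, mul_apply_eq_comp, h3, h2]
    simp
  map_zero' := by simpa using IrrRep.pointwiseOp_algebraMap (A := A) (μ := μ) 0
  map_add' a b := by
    refine ContinuousLinearMap.ext fun ζ => Lp.ext ?_
    filter_upwards [IrrRep.coeFn_pointwiseOp (a + b) ζ, IrrRep.coeFn_pointwiseOp b ζ,
      IrrRep.coeFn_pointwiseOp a ζ,
      Lp.coeFn_add (IrrRep.pointwiseOp μ a ζ) (IrrRep.pointwiseOp μ b ζ)] with y h1 h2 h3 h4
    rw [h1, add_apply, h4, Pi.add_apply, h3, h2]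
    simp
  commutes' := IrrRep.pointwiseOp_algebraMap
  map_star' a := by
    rw [ContinuousLinearMap.star_eq_adjoint, ContinuousLinearMap.eq_adjoint_iff]
    intro ζ η
    rw [L2.inner_def, L2.inner_def]
    refine integral_congr_ae ?_
    filter_upwards [IrrRep.coeFn_pointwiseOp (star a) ζ, IrrRep.coeFn_pointwiseOp a η]
      with y h1 h2
    rw [h1, h2, map_star, ContinuousLinearMap.star_eq_adjoint,
      ContinuousLinearMap.adjoint_inner_left]

theorem IrrRep.coeFn_pointwiseRep (a : A) (ζ : Lp H₀ 2 μ) :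
    (IrrRep.pointwiseRep μ a ζ : IrrRep A H₀ → H₀) =ᵐ[μ] fun y => (y : CRep A H₀) a (ζ y) :=
  IrrRep.coeFn_pointwiseOp a ζ

end PointwiseAction

/-- A linear choice of evaluation maps on a finite-dimensional subspace of `L²`. -/
theorem MeasureTheory.Lp.exists_linear_eval {Y E : Type*} [MeasurableSpace Y] {μ : Measure Y}
    [NormedAddCommGroup E] [InnerProductSpace ℂ E] (K : Submodule ℂ (Lp E 2 μ))
    [FiniteDimensional ℂ K] :
    ∃ T : Y → K →ₗ[ℂ] E, ∀ k : K, ∀ᵐ y ∂μ, T y k = (k : Lp E 2 μ) y := by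
  let b := Module.finBasis ℂ K
  refine ⟨fun y => b.constr ℂ fun i => (b i : Lp E 2 μ) y, fun k => ?_⟩
  have hk : k ∈ Submodule.span ℂ (Set.range b) := b.span_eq ▸ Submodule.mem_top
  induction hk using Submodule.span_induction with
  | mem k hk =>
    obtain ⟨i, rfl⟩ := hk
    exact ae_of_all _ fun y => b.constr_basis ℂ _ i
  | zero =>
    filter_upwards [Lp.coeFn_zero E 2 μ] with y hy
    rw [map_zero, ZeroMemClass.coe_zero, hy, Pi.zero_apply]
  | add k l _ _ hk hl =>
    filter_upwards [hk, hl, Lp.coeFn_add (k : Lp E 2 μ) l] with y h1 h2 h3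
    rw [map_add, h1, h2, Submodule.coe_add, h3, Pi.add_apply]
  | smul c k _ hk =>
    filter_upwards [hk, Lp.coeFn_smul c (k : Lp E 2 μ)] with y h1 h2
    rw [map_smul, h1, Submodule.coe_smul, h2, Pi.smul_apply]

open scoped CStarAlgebra in
/-- On a finite-dimensional invariant subspace, almost every evaluation map is an intertwiner. -/
theorem IrrRep.ae_intertwines {A H₀ : Type*} [CStarAlgebra A]
    [TopologicalSpace.SeparableSpace A]
    [NormedAddCommGroup H₀] [InnerProductSpace ℂ H₀] [CompleteSpace H₀]
    [FiniteDimensional ℂ H₀] {μ : Measure (IrrRep A H₀)} {K : Submodule ℂ (Lp H₀ 2 μ)}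
    [FiniteDimensional ℂ K] (hinv : CRepInvariant (IrrRep.pointwiseRep μ) K)
    {T : IrrRep A H₀ → K →ₗ[ℂ] H₀} (hT : ∀ k : K, ∀ᵐ y ∂μ, T y k = (k : Lp H₀ 2 μ) y) :
    ∀ᵐ y ∂μ, ∀ (a : A) (k : K), T y ⟨IrrRep.pointwiseRep μ a k, hinv a k k.2⟩ =
      (y : CRep A H₀) a (T y k) := by
  let b := Module.finBasis ℂ K
  have hae : ∀ᵐ y ∂μ, ∀ (n : ℕ) (i : Fin (Module.finrank ℂ K)),
      T y ⟨IrrRep.pointwiseRep μ (TopologicalSpace.denseSeq A n) (b i), hinv _ _ (b i).2⟩ =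
        (y : CRep A H₀) (TopologicalSpace.denseSeq A n) (T y (b i)) := by
    refine ae_all_iff.2 fun n => ae_all_iff.2 fun i => ?_
    filter_upwards [hT (b i),
      hT ⟨IrrRep.pointwiseRep μ (TopologicalSpace.denseSeq A n) (b i), hinv _ _ (b i).2⟩,
      IrrRep.coeFn_pointwiseRep (TopologicalSpace.denseSeq A n) (b i : Lp H₀ 2 μ)] with y h1 h2 h3
    rw [h1, h2, h3]
  filter_upwards [hae] with y hy a k
  let ρ : K →ₗ[ℂ] K := (IrrRep.pointwiseRep μ a : Lp H₀ 2 μ →ₗ[ℂ] Lp H₀ 2 μ).restrict (hinv a)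
  have hbasis : T y ∘ₗ ρ = ((y : CRep A H₀) a : H₀ →ₗ[ℂ] H₀) ∘ₗ T y := by
    refine b.ext fun i => ?_
    have hcont : Continuous fun a : A =>
        T y ⟨IrrRep.pointwiseRep μ a (b i), hinv a _ (b i).2⟩ := by
      refine (T y).continuous_of_finiteDimensional.comp (Continuous.subtype_mk ?_ _)
      exact (map_continuous (IrrRep.pointwiseRep μ)).clm_apply continuous_const
    have hcont' : Continuous fun a : A => (y : CRep A H₀) a (T y (b i)) :=
      (map_continuous (y : CRep A H₀)).clm_apply continuous_const
    exact congrFun (hcont.ext_on (TopologicalSpace.denseRange_denseSeq A) hcont'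
      (by rintro _ ⟨n, rfl⟩; exact hy n i)) a
  exact LinearMap.congr_fun hbasis k

open MeasureTheory in
/-- let `A` be a separable unital C*-algebra, `H₀` a nonzero finite-dimensional
Hilbert space, and `μ` a Borel probability measure on `Y = Irr(A,H₀)` vanishing on every
unitary equivalence class. Then the pointwise action `(θ(a)ζ)(π) = π(a)(ζ(π))` defines a
unital representation `θ` of `A` on `L²(Y,μ;H₀)`, and `θ` is weakly mixing. -/
theorem weaklyMixing_L2_of_null_equivalence_classes
    (A H₀ : Type*) [CStarAlgebra A] [TopologicalSpace.SeparableSpace A]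
    [NormedAddCommGroup H₀] [InnerProductSpace ℂ H₀] [CompleteSpace H₀]
    [FiniteDimensional ℂ H₀] [Nontrivial H₀]
    (μ : Measure (IrrRep A H₀)) [IsProbabilityMeasure μ]
    (hμ : ∀ σ : IrrRep A H₀,
      μ {κ : IrrRep A H₀ | ∃ Z : H₀ ≃ₗᵢ[ℂ] H₀,
        ∀ (a : A) (x : H₀), (κ : CRep A H₀) a (Z x) = Z ((σ : CRep A H₀) a x)} = 0) :
    ∃ θ : CRep A (Lp H₀ 2 μ),
      (∀ (a : A) (ζ : Lp H₀ 2 μ),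
        (θ a ζ : IrrRep A H₀ → H₀) =ᵐ[μ] fun y => (y : CRep A H₀) a (ζ y)) ∧
      CRepWeaklyMixing θ := by
  refine ⟨IrrRep.pointwiseRep μ, IrrRep.coeFn_pointwiseRep, fun K₀ _ hfin hinv₀ => ?_⟩
  by_contra hne₀
  obtain ⟨K, hK, hinv, hne, hmin⟩ := hinv₀.exists_minimal hfin hne₀
  obtain ⟨T, hT⟩ := Lp.exists_linear_eval K
  have hint := IrrRep.ae_intertwines hinv hT
  have hzero : ∀ᵐ y ∂μ, T y = 0 := by
    by_cases hex : ∃ σ : IrrRep A H₀, T σ ≠ 0 ∧ ∀ (a : A) (k : K),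
        T σ ⟨IrrRep.pointwiseRep μ a k, hinv a k k.2⟩ = (σ : CRep A H₀) a (T σ k)
    · obtain ⟨σ, hσ0, hσ⟩ := hex
      filter_upwards [hint, measure_eq_zero_iff_ae_notMem.1 (hμ σ)] with κ hκ hκσ
      by_contra hκ0
      let eσ := LinearEquiv.ofBijective (T σ) (σ.2.bijective_of_intertwines hinv hmin _ hσ hσ0)
      let eκ := LinearEquiv.ofBijective (T κ) (κ.2.bijective_of_intertwines hinv hmin _ hκ hκ0)
      refine hκσ (σ.2.exists_unitary_of_similar (eσ.symm.trans eκ) fun a x => ?_)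
      obtain ⟨k, rfl⟩ := eσ.surjective x
      have hσk : (σ : CRep A H₀) a (eσ k) =
          eσ ⟨IrrRep.pointwiseRep μ a k, hinv a k k.2⟩ := (hσ a k).symm
      rw [hσk, LinearEquiv.trans_apply, LinearEquiv.trans_apply, eσ.symm_apply_apply,
        eσ.symm_apply_apply]
      exact (hκ a k).symm
    · push Not at hex
      filter_upwards [hint] with κ hκ
      by_contra hκ0
      obtain ⟨a, k, hak⟩ := hex κ hκ0
      exact hak (hκ a k)
  refine hne ((Submodule.eq_bot_iff K).2 fun k hk => Lp.ext ?_)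
  filter_upwards [hzero, hT ⟨k, hk⟩, Lp.coeFn_zero H₀ 2 μ] with y h1 h2 h3
  rw [← h2, h1, h3, LinearMap.zero_apply, Pi.zero_apply]
end
end
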